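/- Let p be a prime and let G be a finite Camina p-group. Then G satisfies the unique intersection number condition: for every pair of distinct conjugacy classes C_h ≠ C_i of G there is exactly one conjugacy class C_j with C_h ∩ C_iC_j ≠ ∅. -/

import Mathlib

open Pointwise

/-- A group `G` satisfies the *unique intersection number condition* (condition (3) of
Tanaka's theorem, equivalent to the Terwilliger algebra of the group association scheme of `G`
being almost commutative) if for every pair of distinct conjugacy classes `Ch ≠ Ci` of `G`
there is exactly one conjugacy class `Cj` with `Ch ∩ (Ci * Cj) ≠ ∅`. -/
def UniqueIntersectionNumberCondition (G : Type*) [Group G] : Prop :=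
  ∀ Ch Ci : ConjClasses G, Ch ≠ Ci →
    ∃! Cj : ConjClasses G, (Ch.carrier ∩ (Ci.carrier * Cj.carrier)).Nonempty

/-- A group `G` is a *Camina group* if the conjugacy class of every element `g` outside the
derived subgroup `G' = [G,G]` equals the coset `gG'`. -/
def IsCaminaGroup (G : Type*) [Group G] : Prop :=
  ∀ g : G, g ∉ commutator G → conjugatesOf g = g • (commutator G : Set G)

theorem Matrix.isSquare_det_of_alternating {K : Type*} [Field K] :
    ∀ (n : ℕ) {ι : Type*} [Fintype ι] [DecidableEq ι] (M : Matrix ι ι K),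
      Fintype.card ι ≤ n → M.transpose = -M → (∀ i, M i i = 0) → IsSquare M.det := by
  intro n
  induction n with
  | zero =>
    intro ι _ _ M hn _ _
    have : IsEmpty ι := Fintype.card_eq_zero_iff.mp (by omega)
    simp
  | succ n ih =>
    intro ι _ _ M hn hM hd
    have hM' : ∀ i j, M j i = -M i j := fun i j => congrFun (congrFun hM i) j
    by_cases h0 : M = 0
    · rcases isEmpty_or_nonempty ι with h | h
      · simp
      · rw [h0, Matrix.det_zero]; exact IsSquare.zero
    obtain ⟨i, j, hij⟩ : ∃ i j, M i j ≠ 0 := by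
      by_contra! h
      exact h0 (by ext i j; exact h i j)
    have hne : i ≠ j := fun h => hij (h ▸ hd i)
    let f : Fin 2 ⊕ {k // k ≠ i ∧ k ≠ j} → ι := Sum.elim ![i, j] Subtype.val
    have hf : Function.Bijective f := by
      constructor
      · rintro (a | ⟨a, ha⟩) (b | ⟨b, hb⟩) h
        · fin_cases a <;> fin_cases b <;> simp [f, hne, hne.symm] at h ⊢
        · fin_cases a
          · exact absurd h.symm hb.1
          · exact absurd h.symm hb.2
        · fin_cases b
          · exact absurd h ha.1
          · exact absurd h ha.2
        · exact congrArg Sum.inr (Subtype.ext h)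
      · intro k
        by_cases h1 : k = i
        · exact ⟨Sum.inl 0, by simp [f, h1]⟩
        by_cases h2 : k = j
        · exact ⟨Sum.inl 1, by simp [f, h2]⟩
        · exact ⟨Sum.inr ⟨k, h1, h2⟩, rfl⟩
    let e := Equiv.ofBijective f hf
    rw [← Matrix.det_submatrix_equiv_self e M]
    set N := M.submatrix e e with hN
    have hN' : ∀ a b, N b a = -N a b := fun a b => hM' _ _
    have hNd : ∀ a, N a a = 0 := fun a => hd _
    rw [← Matrix.fromBlocks_toBlocks N]
    have hA : N.toBlocks₁₁ = !![0, M i j; -M i j, 0] := by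
      ext a b
      fin_cases a <;> fin_cases b <;>
        simp [Matrix.toBlocks₁₁, hN, e, f, hd, hM' i j]
    have hAdet : N.toBlocks₁₁.det = M i j * M i j := by
      rw [hA, Matrix.det_fin_two_of]; ring
    have : Invertible N.toBlocks₁₁.det := invertibleOfNonzero (by
      rw [hAdet]; exact mul_ne_zero hij hij)
    have : Invertible N.toBlocks₁₁ := Matrix.invertibleOfDetInvertible _
    have hinv : ⅟N.toBlocks₁₁ = !![0, -(M i j)⁻¹; (M i j)⁻¹, 0] := by
      rw [Matrix.invOf_eq_nonsing_inv]
      apply Matrix.inv_eq_right_inv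
      rw [hA]
      ext a b
      fin_cases a <;> fin_cases b <;> simp [Matrix.mul_apply, hij]
    rw [Matrix.det_fromBlocks₁₁, hAdet]
    refine IsSquare.mul ⟨_, rfl⟩ (ih _ ?_ ?_ ?_)
    · have h1 := Fintype.card_congr e
      rw [Fintype.card_sum, Fintype.card_fin] at h1
      omega
    · ext a b
      simp only [hinv, Matrix.transpose_apply, Matrix.sub_apply, Matrix.neg_apply,
        Matrix.mul_apply, Fin.sum_univ_two, Matrix.toBlocks₂₂, Matrix.toBlocks₁₂,
        Matrix.toBlocks₂₁, Matrix.of_apply]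
      rw [hN' (Sum.inr a) (Sum.inr b), hN' (Sum.inl 0) (Sum.inr b), hN' (Sum.inl 1) (Sum.inr b),
        hN' (Sum.inl 0) (Sum.inr a), hN' (Sum.inl 1) (Sum.inr a)]
      simp
      ring
    · intro a
      simp only [hinv, Matrix.sub_apply, Matrix.mul_apply, Fin.sum_univ_two, Matrix.toBlocks₂₂,
        Matrix.toBlocks₁₂, Matrix.toBlocks₂₁, Matrix.of_apply]
      rw [hNd, hN' (Sum.inl 0) (Sum.inr a), hN' (Sum.inl 1) (Sum.inr a)]
      simp
      ring

theorem two_mul_finrank_le_of_alternating {K S V : Type*} [Field K] [Finite K]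
    [AddCommGroup S] [Module K S] [FiniteDimensional K S]
    [AddCommGroup V] [Module K V] [FiniteDimensional K V] [Nontrivial V]
    (A : S →ₗ[K] V →ₗ[K] V →ₗ[K] K) (halt : ∀ s v, A s v v = 0)
    (hnd : ∀ s, s ≠ 0 → ∀ v, (∀ v', A s v v' = 0) → v = 0) :
    2 * Module.finrank K S ≤ Module.finrank K V := by
  classical
  have := Fintype.ofFinite K
  by_contra! hlt
  set m := Module.finrank K S
  set N := Module.finrank K V with hNdef
  let bS := Module.finBasis K S
  let bV := Module.finBasis K V
  let M : Matrix (Fin N) (Fin N) (MvPolynomial (Fin m) K) := fun i j =>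
    ∑ k, MvPolynomial.C (A (bS k) (bV i) (bV j)) * MvPolynomial.X k
  have hskew : ∀ s v v', A s v' v = -A s v v' := fun s v v' => by
    have h := halt s (v + v')
    simp only [map_add, LinearMap.add_apply, halt, zero_add, add_zero] at h
    exact eq_neg_of_add_eq_zero_left h
  have hM1 : M.transpose = -M := by
    refine Matrix.ext fun i j => ?_
    change (∑ k, MvPolynomial.C (A (bS k) (bV j) (bV i)) * MvPolynomial.X k) =
      -∑ k, MvPolynomial.C (A (bS k) (bV i) (bV j)) * MvPolynomial.X k
    rw [← Finset.sum_neg_distrib]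
    refine Finset.sum_congr rfl fun k _ => ?_
    rw [hskew, map_neg, neg_mul]
  have hM2 : ∀ i, M i i = 0 := fun i => by simp [M, halt]
  obtain ⟨d, hd⟩ := Matrix.isSquare_det_of_alternating
    (K := FractionRing (MvPolynomial (Fin m) K)) N
    (M.map (algebraMap _ _)) (by simp)
    (by rw [← Matrix.transpose_map, hM1]; ext; simp) (fun i => by simp [hM2])
  rw [← RingHom.mapMatrix_apply, ← RingHom.map_det] at hd
  obtain ⟨P, hP⟩ := IsIntegrallyClosed.exists_algebraMap_eq_of_isIntegral_pow
    (R := MvPolynomial (Fin m) K) (x := d) (n := 2) two_pos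
    (by rw [pow_two, ← hd]; exact isIntegral_algebraMap)
  have hPM : M.det = P * P := by
    apply IsFractionRing.injective (MvPolynomial (Fin m) K) (FractionRing (MvPolynomial (Fin m) K))
    rw [hd, ← hP, map_mul]
  have hdeg : M.det.totalDegree ≤ N := by
    rw [Matrix.det_apply]
    refine MvPolynomial.totalDegree_finsetSum_le fun σ _ => ?_
    refine (MvPolynomial.totalDegree_smul_le _ _).trans ?_
    refine (MvPolynomial.totalDegree_finsetProd _ _).trans ?_
    refine (Finset.sum_le_card_nsmul _ _ 1 fun i _ => ?_).trans (by simp)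
    refine MvPolynomial.totalDegree_finsetSum_le fun k _ => ?_
    refine (MvPolynomial.totalDegree_mul _ _).trans ?_
    simp
  have heval : ∀ x : Fin m → K, MvPolynomial.eval x P = 0 ↔ x = 0 := by
    intro x
    have h1 : MvPolynomial.eval x M.det = MvPolynomial.eval x P * MvPolynomial.eval x P := by
      rw [hPM, map_mul]
    have hent : ∀ i j, MvPolynomial.eval x (M i j) = A (bS.equivFun.symm x) (bV i) (bV j) := by
      intro i j
      simp [M, Module.Basis.equivFun_symm_apply, mul_comm]
    rw [← mul_self_eq_zero, ← h1, RingHom.map_det]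
    constructor
    · intro h0
      by_contra hx
      obtain ⟨v, hv, hv0⟩ := Matrix.exists_mulVec_eq_zero_iff.mpr h0
      apply hv
      have hs : bS.equivFun.symm x ≠ 0 := bS.equivFun.symm.map_ne_zero_iff.mpr hx
      have := hnd _ hs (bV.equivFun.symm v) (fun v' => ?_)
      · exact bV.equivFun.symm.map_eq_zero_iff.mp this
      · have hz : A (bS.equivFun.symm x) (bV.equivFun.symm v) = 0 := by
          refine bV.ext fun i => ?_
          have h3 := congrFun hv0 i
          simp only [Matrix.mulVec, dotProduct, RingHom.mapMatrix_apply, Matrix.map_apply, hent,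
            Pi.zero_apply] at h3
          rw [LinearMap.zero_apply, hskew, neg_eq_zero, Module.Basis.equivFun_symm_apply, map_sum]
          simpa [mul_comm] using h3
        rw [hz, LinearMap.zero_apply]
    · rintro rfl
      have hN : 0 < N := Module.finrank_pos
      have : Nonempty (Fin N) := ⟨⟨0, hN⟩⟩
      convert Matrix.det_zero (n := Fin N) (R := K)
      exact Matrix.ext fun i j => (hent i j).trans (by simp)
  have hP0 : P ≠ 0 := by
    intro h
    have hm : 0 < m := by omega
    have := (heval (fun _ => 1)).mp (by simp [h])
    exact one_ne_zero (congrFun this ⟨0, hm⟩)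
  have hPdeg : 2 * P.totalDegree ≤ N := by
    rw [hPM, MvPolynomial.totalDegree_mul_of_isDomain hP0 hP0] at hdeg
    omega
  have hq : 1 < Fintype.card K := Fintype.one_lt_card
  have hsum := MvPolynomial.sum_eval_eq_zero (P ^ (Fintype.card K - 1)) (by
    refine (MvPolynomial.totalDegree_pow _ _).trans_lt ?_
    rw [Fintype.card_fin]
    exact Nat.mul_lt_mul_of_pos_left (by omega) (by omega))
  have hterm : ∀ x : Fin m → K,
      MvPolynomial.eval x (P ^ (Fintype.card K - 1)) = 1 - if x = 0 then 1 else 0 := by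
    intro x
    rw [map_pow]
    split_ifs with hx
    · rw [(heval x).mpr hx, zero_pow (by omega), sub_self]
    · rw [FiniteField.pow_card_sub_one_eq_one _ (fun h => hx ((heval x).mp h)), sub_zero]
  simp only [hterm, Finset.sum_sub_distrib, Finset.sum_const, Finset.sum_ite_eq', Finset.mem_univ,
    if_true, Finset.card_univ, nsmul_eq_mul, mul_one, Fintype.card_fun, Fintype.card_fin,
    Nat.cast_pow, FiniteField.cast_card_eq_zero] at hsum
  rw [zero_pow (by omega)] at hsum
  simp at hsum
namespace LinearMap

variable {K V W Φ : Type*} [Field K] [AddCommGroup V] [Module K V]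
  [AddCommGroup W] [Module K W] [AddCommGroup Φ] [Module K Φ]

theorem finrank_map_add_finrank_inf_ker [FiniteDimensional K V]
    (f : V →ₗ[K] W) (S : Submodule K V) :
    Module.finrank K (S.map f) + Module.finrank K (S ⊓ ker f : Submodule K V) =
      Module.finrank K S := by
  have h := finrank_range_add_finrank_ker (f.domRestrict S)
  rwa [range_domRestrict, ker_domRestrict, ← Submodule.finrank_map_subtype_eq,
    Submodule.map_comap_subtype] at h

theorem finrank_range_le_finrank_range_flip [FiniteDimensional K V] (T : W →ₗ[K] V →ₗ[K] K) :
    Module.finrank K (range T) ≤ Module.finrank K (range T.flip) := by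
  have h1 : range T ≤ (ker T.flip).dualAnnihilator := by
    rintro _ ⟨w, rfl⟩
    rw [Submodule.mem_dualAnnihilator]
    intro v hv
    rw [← flip_apply, mem_ker.mp hv, zero_apply]
  have h2 : Module.finrank K (range T) ≤ Module.finrank K (ker T.flip).dualAnnihilator :=
    Submodule.finrank_mono h1
  have h3 : Module.finrank K (ker T.flip) + Module.finrank K (ker T.flip).dualAnnihilator =
      Module.finrank K V := Subspace.finrank_add_finrank_dualAnnihilator_eq (ker T.flip)
  have h4 := finrank_range_add_finrank_ker T.flip
  omega

theorem finrank_range_flip [FiniteDimensional K V] [FiniteDimensional K W]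
    (T : W →ₗ[K] V →ₗ[K] K) :
    Module.finrank K (range T.flip) = Module.finrank K (range T) :=
  le_antisymm (finrank_range_le_finrank_range_flip T.flip)
    (finrank_range_le_finrank_range_flip T)

/-- The bilinear form obtained from a trilinear form by fixing its last argument. -/
def formAt (t : W →ₗ[K] V →ₗ[K] Φ →ₗ[K] K) (φ : Φ) : W →ₗ[K] V →ₗ[K] K :=
  t.compr₂ (applyₗ φ)

@[simp]
theorem formAt_apply (t : W →ₗ[K] V →ₗ[K] Φ →ₗ[K] K) (φ : Φ) (w : W) (v : V) :
    t.formAt φ w v = t w v φ := rfl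

theorem mem_ker_formAt_flip {t : W →ₗ[K] V →ₗ[K] Φ →ₗ[K] K} {φ : Φ} {v : V} :
    v ∈ ker (t.formAt φ).flip ↔ ∀ w, t w v φ = 0 := by
  rw [mem_ker, LinearMap.ext_iff]
  rfl

/-- The linear data carried by the first three lower central factors `V`, `W`, `Φ*` of a Camina
`p`-group: the commutator maps `m` and `t` and their Jacobi identity, together with the dimension
bound satisfied by centralizers in the class-three quotient. -/
structure IsCaminaTriple (m : V →ₗ[K] V →ₗ[K] W) (t : W →ₗ[K] V →ₗ[K] Φ →ₗ[K] K) : Prop where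
  alternating : ∀ v, m v v = 0
  surjective : ∀ v, v ≠ 0 → Function.Surjective (m v)
  injective : ∀ φ, φ ≠ 0 → ∃ w v, t w v φ ≠ 0
  jacobi : ∀ x y z φ, t (m x y) z φ + t (m y z) x φ + t (m z x) y φ = 0
  bound : ∀ (S : Submodule K Φ) (U : Submodule K V), U ≠ ⊥ →
    (∀ u ∈ U, u ≠ 0 → ker (m u) = U) → (∀ s ∈ S, ∀ w, ∀ u ∈ U, t w u s = 0) →
    2 * Module.finrank K S ≤ Module.finrank K U

namespace IsCaminaTriple

variable {m : V →ₗ[K] V →ₗ[K] W} {t : W →ₗ[K] V →ₗ[K] Φ →ₗ[K] K}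

theorem skew (h : IsCaminaTriple m t) (x y : V) : m x y = -m y x := by
  have := h.alternating (x + y)
  simp only [map_add, add_apply, h.alternating, zero_add, add_zero] at this
  exact eq_neg_of_add_eq_zero_right this

theorem map_ker_formAt_flip (h : IsCaminaTriple m t) {φ : Φ} {x y : V}
    (hx : x ∈ ker (t.formAt φ).flip) (hy : y ∈ ker (t.formAt φ).flip) :
    m x y ∈ ker (t.formAt φ) := by
  rw [mem_ker_formAt_flip] at hx hy
  rw [mem_ker]
  ext z
  have := h.jacobi x y z φ
  rwa [hx, hy, add_zero, add_zero] at this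

theorem finrank_ker_apply [FiniteDimensional K V] (h : IsCaminaTriple m t) {v : V} (hv : v ≠ 0) :
    Module.finrank K W + Module.finrank K (ker (m v)) = Module.finrank K V := by
  have := finrank_range_add_finrank_ker (m v)
  rwa [range_eq_top.mpr (h.surjective v hv), finrank_top] at this

variable [FiniteDimensional K V] [FiniteDimensional K W]

/-- The numerical consequences of a nonzero `φ`. -/
theorem dimensions [Finite K] (h : IsCaminaTriple m t) {φ : Φ} (hφ : φ ≠ 0) :
    ker (t.formAt φ) = ⊥ ∧ Module.finrank K V = 2 * Module.finrank K W ∧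
      Module.finrank K (ker (t.formAt φ).flip) = Module.finrank K W ∧ 0 < Module.finrank K W := by
  obtain ⟨w₀, v₀, hwv⟩ := h.injective φ hφ
  have : Nontrivial V := ⟨v₀, 0, fun h0 => hwv (by rw [h0, map_zero, zero_apply])⟩
  have hW : 0 < Module.finrank K W := by
    have : Nontrivial W := ⟨w₀, 0, fun h0 => hwv (by rw [h0, map_zero, zero_apply, zero_apply])⟩
    exact Module.finrank_pos
  have hform : ∀ S : Submodule K (Module.Dual K W),
      2 * Module.finrank K S ≤ Module.finrank K V := by
    intro S
    let A : S →ₗ[K] V →ₗ[K] V →ₗ[K] K :=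
      LinearMap.mk₂ K (fun s v => (s : Module.Dual K W) ∘ₗ m v)
        (fun _ _ _ => rfl) (fun _ _ _ => rfl)
        (fun s v v' => by ext; simp) (fun c s v => by ext; simp)
    refine two_mul_finrank_le_of_alternating (K := K) (S := S) (V := V) A
      (fun s v => by simp [A, h.alternating]) fun s hs v hv => ?_
    by_contra hv0
    refine hs (Subtype.ext (LinearMap.ext fun w => ?_))
    obtain ⟨v', rfl⟩ := h.surjective v hv0 w
    exact hv v'
  have hr := finrank_range_flip (t.formAt φ)
  have hk1 := finrank_range_add_finrank_ker (t.formAt φ)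
  have hk2 := finrank_range_add_finrank_ker (t.formAt φ).flip
  have hann := Subspace.finrank_add_finrank_dualAnnihilator_eq (ker (t.formAt φ))
  have h1 := hform (ker (t.formAt φ)).dualAnnihilator
  have h2 := hform ⊤
  rw [finrank_top, Subspace.dual_finrank_eq] at h2
  have hpos : 0 < Module.finrank K (range (t.formAt φ)) := by
    refine Nat.pos_of_ne_zero fun h0 => hwv ?_
    rw [← formAt_apply, range_eq_bot.mp (Submodule.finrank_eq_zero.mp h0)]
    rfl
  obtain ⟨l, hl, hl0⟩ : ∃ l ∈ (ker (t.formAt φ)).dualAnnihilator, l ≠ 0 := by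
    refine Submodule.exists_mem_ne_zero_of_ne_bot fun h0 => ?_
    rw [h0, finrank_bot] at hann
    omega
  have hle : (ker (t.formAt φ).flip).map (m.compr₂ l) ≤
      (ker (t.formAt φ).flip).dualAnnihilator := by
    rintro _ ⟨x, hx, rfl⟩
    rw [Submodule.mem_dualAnnihilator]
    exact fun y hy => (Submodule.mem_dualAnnihilator l).mp hl _ (h.map_ker_formAt_flip hx hy)
  have hinj : ker (m.compr₂ l) = ⊥ := by
    rw [eq_bot_iff]
    intro v hv
    by_contra hv0
    refine hl0 (LinearMap.ext fun w => ?_)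
    obtain ⟨v', rfl⟩ := h.surjective v hv0 w
    exact LinearMap.congr_fun (mem_ker.mp hv) v'
  have hm1 := finrank_map_add_finrank_inf_ker (m.compr₂ l) (ker (t.formAt φ).flip)
  rw [hinj, inf_bot_eq, finrank_bot] at hm1
  have hm2 := (Submodule.finrank_mono hle).trans_eq (Nat.eq_sub_of_add_eq'
    (Subspace.finrank_add_finrank_dualAnnihilator_eq (ker (t.formAt φ).flip)))
  refine ⟨?_, by omega, by omega, hW⟩
  rw [← Submodule.finrank_eq_zero (R := K)]
  omega

theorem ker_apply_eq [Finite K] (h : IsCaminaTriple m t) {φ : Φ} (hφ : φ ≠ 0) {u : V}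
    (hu : u ∈ ker (t.formAt φ).flip) (hu0 : u ≠ 0) : ker (m u) = ker (t.formAt φ).flip := by
  obtain ⟨h1, h2, h3, h4⟩ := h.dimensions hφ
  have h5 := h.finrank_ker_apply hu0
  refine (Submodule.eq_of_le_of_finrank_le (fun v hv => ?_) (by omega)).symm
  have := h.map_ker_formAt_flip hu hv
  rwa [h1, Submodule.mem_bot] at this

theorem ne_bot [Finite K] (h : IsCaminaTriple m t) {φ : Φ} (hφ : φ ≠ 0) :
    ker (t.formAt φ).flip ≠ ⊥ := by
  obtain ⟨h1, h2, h3, h4⟩ := h.dimensions hφ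
  intro h0
  rw [h0, finrank_bot] at h3
  omega

/-- The functionals vanishing at a fixed nonzero vector form a small subspace. -/
theorem two_mul_finrank_le [Finite K] (h : IsCaminaTriple m t) (S : Submodule K Φ) {v : V}
    (hv : v ≠ 0) (hS : ∀ s ∈ S, ∀ w, t w v s = 0) :
    2 * Module.finrank K S ≤ Module.finrank K W := by
  by_cases hS0 : S = ⊥
  · rw [hS0, (finrank_bot K Φ :)]
    omega
  obtain ⟨φ, hφS, hφ⟩ := Submodule.exists_mem_ne_zero_of_ne_bot hS0
  have hker : ∀ s ∈ S, s ≠ 0 → ker (m v) = ker (t.formAt s).flip := fun s hs hs0 =>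
    h.ker_apply_eq hs0 (mem_ker_formAt_flip.mpr (hS s hs)) hv
  rw [← (h.dimensions hφ).2.2.1]
  refine h.bound S _ (h.ne_bot hφ) (fun u hu hu0 => h.ker_apply_eq hφ hu hu0) fun s hs w u hu => ?_
  by_cases hs0 : s = 0
  · rw [hs0, map_zero]
  rw [← hker φ hφS hφ, hker s hs hs0] at hu
  exact mem_ker_formAt_flip.mp hu w

/-- No nonzero `φ` exists in the presence of a squaring functional. -/
theorem eq_zero_of_square [Finite K] (h : IsCaminaTriple m t) {φ : Φ} (σ : W →ₗ[K] K)
    (hσ : ∀ c ∈ ker (t.formAt φ).flip, ∀ a, σ (m c a) = t (m c a) a φ) : φ = 0 := by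
  by_contra hφ
  obtain ⟨h1, h2, h3, h4⟩ := h.dimensions hφ
  set U := ker (t.formAt φ).flip with hU
  have hval : ∀ a, a ∉ U → ∀ w, σ w = t w a φ := by
    intro a ha w
    let f : U →ₗ[K] W := (m.flip a).domRestrict U
    have hinj : Function.Injective f := by
      rw [← ker_eq_bot, eq_bot_iff]
      intro c hc
      by_contra hc0
      refine ha (?_ : a ∈ ker (t.formAt φ).flip)
      rw [← h.ker_apply_eq hφ c.2 fun h0 => hc0 (Subtype.ext h0)]
      exact hc
    obtain ⟨c, rfl⟩ := (injective_iff_surjective_of_finrank_eq_finrank h3).mp hinj w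
    exact hσ c c.2 a
  obtain ⟨a, ha⟩ : ∃ a, a ∉ U := by
    obtain ⟨w, v, hwv⟩ := h.injective φ hφ
    exact ⟨v, fun hv => hwv (mem_ker_formAt_flip.mp hv w)⟩
  have htop : U ⊔ Submodule.span K {a} = ⊤ := by
    rw [eq_top_iff]
    intro v _
    by_cases hv : v ∈ U
    · exact Submodule.mem_sup_left hv
    · have : v - a ∈ U := mem_ker_formAt_flip.mpr fun w => by
        rw [map_sub, sub_apply, ← hval v hv, ← hval a ha, sub_self]
      rw [← sub_add_cancel v a]
      exact Submodule.add_mem_sup this (Submodule.mem_span_singleton_self a)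
  have hd := Submodule.finrank_add_le_finrank_add_finrank U (Submodule.span K {a})
  have hs := finrank_span_le_card (R := K) ({a} : Set V)
  rw [Set.toFinset_singleton, Finset.card_singleton] at hs
  rw [htop, finrank_top] at hd
  obtain ⟨u, hu, hu0⟩ := Submodule.exists_mem_ne_zero_of_ne_bot (h.ne_bot hφ)
  have hb := h.two_mul_finrank_le (Submodule.span K {φ}) hu0 (fun s hs w => by
    obtain ⟨c, rfl⟩ := Submodule.mem_span_singleton.mp hs
    rw [map_smul, mem_ker_formAt_flip.mp hu, smul_zero])
  rw [finrank_span_singleton hφ] at hb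
  omega

/-- In odd characteristic the linear data of a nontrivial fourth lower central factor are
inconsistent. -/
theorem false_of_fourth [Finite K] [FiniteDimensional K Φ] (h : IsCaminaTriple m t)
    (h2 : (2 : K) ≠ 0) (κ : V →ₗ[K] Φ) (hκ : κ ≠ 0) (β : W →ₗ[K] W →ₗ[K] K)
    (hβ : ∀ w, β w w = 0)
    (hJ : ∀ w v v', t w v (κ v') - t w v' (κ v) = β w (m v v')) : False := by
  obtain ⟨v₀, hv₀⟩ : ∃ v, κ v ≠ 0 := by
    by_contra! h0
    exact hκ (LinearMap.ext h0)
  have hβs : ∀ w w', β w w' = -β w' w := fun w w' => by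
    have := hβ (w + w')
    simp only [map_add, add_apply, hβ, zero_add, add_zero] at this
    exact eq_neg_of_add_eq_zero_right this
  obtain ⟨-, hV, -, hn⟩ := h.dimensions hv₀
  set n := Module.finrank K W
  let B := range κ
  let C := ker κ
  have hC : Module.finrank K B + Module.finrank K C = 2 * n := by
    rw [← hV]
    exact finrank_range_add_finrank_ker κ
  have hv₀B : κ v₀ ∈ B := ⟨v₀, rfl⟩
  have htc : ∀ c ∈ C, ∀ w b, t w c (κ b) = β w (m c b) := fun c hc w b => by
    rw [← hJ, mem_ker.mp hc, map_zero, sub_zero]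
  -- the functionals in `B` vanishing at `v` have small corank
  have hS : ∀ v, v ≠ 0 → 2 * Module.finrank K (B ⊓ ker (t.flip v).flip : Submodule K Φ) ≤ n :=
    fun v hv => h.two_mul_finrank_le _ hv fun s hs w => LinearMap.congr_fun hs.2 w
  have hk1 : ∀ v, Module.finrank K (B.map (t.flip v).flip) +
      Module.finrank K (B ⊓ ker (t.flip v).flip : Submodule K Φ) = Module.finrank K B :=
    fun v => finrank_map_add_finrank_inf_ker _ _
  have hvne : v₀ ≠ 0 := fun h0 => hv₀ (by rw [h0, map_zero])
  have h0 : 2 * Module.finrank K B + 2 ≤ 3 * n := by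
    have hle : 2 * Module.finrank K B ≤ 3 * n := by
      have e1 := hS v₀ hvne
      have e2 := hk1 v₀
      have e3 : Module.finrank K (B.map (t.flip v₀).flip) ≤ n :=
        (Submodule.finrank_le _).trans_eq (Subspace.dual_finrank_eq (K := K) (V := W))
      omega
    have hW : Nontrivial W := Module.nontrivial_of_finrank_pos hn
    obtain ⟨w, hw⟩ := exists_ne (0 : W)
    obtain ⟨v, hv, hv0⟩ := Submodule.exists_mem_ne_zero_of_ne_bot
      (ker_ne_bot_of_finrank_lt (f := (B.subtype.dualMap) ∘ₗ (t w)) (by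
        rw [(Subspace.dual_finrank_eq : Module.finrank K (Module.Dual K B) = _), hV]
        omega))
    have e1 := hS v hv0
    have e2 := hk1 v
    have e3 : B.map (t.flip v).flip ≤ (Submodule.span K {w}).dualAnnihilator := by
      rintro _ ⟨b, hb, rfl⟩
      rw [Submodule.mem_dualAnnihilator]
      intro w' hw'
      obtain ⟨a, rfl⟩ := Submodule.mem_span_singleton.mp hw'
      rw [map_smul]
      exact smul_eq_zero_of_right _ (LinearMap.congr_fun hv ⟨b, hb⟩)
    have e4 := (Submodule.finrank_mono e3).trans_eq (Nat.eq_sub_of_add_eq'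
      (Subspace.finrank_add_finrank_dualAnnihilator_eq (Submodule.span K {w})))
    rw [finrank_span_singleton hw] at e4
    change _ ≤ n - 1 at e4
    omega
  let W₀ := ker β
  have hW₀ : ∀ w, w ∈ W₀ ↔ ∀ w', β w' w = 0 := fun w => by
    rw [mem_ker, LinearMap.ext_iff]
    refine forall_congr' fun w' => ?_
    rw [zero_apply, hβs w w', neg_eq_zero]
  have hCC : ∀ c ∈ C, ∀ c' ∈ C, m c c' ∈ W₀ := fun c hc c' hc' => by
    rw [hW₀]
    intro w
    rw [← htc c hc, mem_ker.mp hc', map_zero]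
  have hM : ∀ c, c ≠ 0 → Module.finrank K (W₀.comap (m c)) = n + Module.finrank K W₀ :=
    fun c hc => by
    have e1 := finrank_map_add_finrank_inf_ker (m c) (W₀.comap (m c))
    rw [Submodule.map_comap_eq_of_surjective (h.surjective c hc),
      inf_eq_right.mpr (ker_le_comap (m c))] at e1
    have e2 := h.finrank_ker_apply hc
    rw [hV] at e2
    omega
  have hκM : ∀ c, Module.finrank K ((W₀.comap (m c)).map κ) +
      Module.finrank K (W₀.comap (m c) ⊓ C : Submodule K V) = Module.finrank K (W₀.comap (m c)) :=
    fun c => finrank_map_add_finrank_inf_ker κ _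
  have hκMle : ∀ c ∈ C, (W₀.comap (m c)).map κ ≤ B ⊓ ker (t.flip c).flip := by
    rintro c hc _ ⟨b, hb, rfl⟩
    refine ⟨⟨b, rfl⟩, LinearMap.ext fun w => ?_⟩
    exact (htc c hc w b).trans ((hW₀ _).mp hb w)
  have hMC : ∀ c, Module.finrank K (W₀.comap (m c) ⊓ C : Submodule K V) ≤ Module.finrank K C :=
    fun c => Submodule.finrank_mono inf_le_right
  by_cases hcase : ∃ c ∈ C, c ≠ 0 ∧ ∃ φ ∈ B, φ ≠ 0 ∧ c ∈ ker (t.formAt φ).flip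
  · obtain ⟨c, hc, hc0, φ, hφB, hφ, hcφ⟩ := hcase
    have hker := h.ker_apply_eq hφ hcφ hc0
    obtain ⟨b₀, rfl⟩ := hφB
    have e1 := Submodule.finrank_mono (hκMle c hc)
    have e2 := hS c hc0
    have e3 := hM c hc0
    have e4 := hκM c
    have e5 := hMC c
    have h1 : 2 * Module.finrank K B + 2 * Module.finrank K W₀ ≤ 3 * n := by omega
    have hUn : Module.finrank K (ker (m c)) = n := by
      rw [hker]
      exact (h.dimensions hφ).2.2.1
    by_cases hs : Module.finrank K W₀ = n
    · have hW₀top : W₀ = ⊤ := Submodule.eq_top_of_finrank_eq hs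
      have hCU : C ≤ ker (m c) := fun c' hc' => by
        rw [hker, mem_ker_formAt_flip]
        intro w
        rw [htc c' hc']
        exact (hW₀ _).mp (hW₀top ▸ Submodule.mem_top) w
      have e6 := Submodule.finrank_mono hCU
      omega
    have hsn : Module.finrank K W₀ ≤ n := Submodule.finrank_le _
    have hCU := finrank_map_add_finrank_inf_ker (m c) C
    have hCU' : Module.finrank K (C.map (m c)) ≤ Module.finrank K W₀ := by
      refine Submodule.finrank_mono ?_
      rintro _ ⟨c', hc', rfl⟩
      exact hCC c hc c' hc'
    have hsym : ∀ c' ∈ C ⊓ ker (m c), ∀ v b, β (m c v) (m c' b) = β (m c' v) (m c b) := by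
      rintro c' ⟨hc', hcc'⟩ v b
      rw [← htc c' hc', ← htc c hc]
      have := h.jacobi c v c' (κ b)
      rw [h.skew c' c, mem_ker.mp hcc', neg_zero, map_zero, zero_apply, zero_apply, add_zero,
        h.skew v c', map_neg, neg_apply, neg_apply] at this
      exact eq_of_sub_eq_zero ((sub_eq_add_neg _ _).trans this)
    obtain ⟨M', hM'⟩ := Submodule.exists_isCompl (W₀.comap (m c))
    have hdM' := Submodule.finrank_add_eq_of_isCompl hM'
    rw [hV, e3] at hdM'
    have : Nontrivial M' := Module.nontrivial_of_finrank_pos (R := K) (by omega)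
    let A : (C ⊓ ker (m c) : Submodule K V) →ₗ[K] M' →ₗ[K] M' →ₗ[K] K :=
      LinearMap.mk₂ K (fun c' v => β (m c v) ∘ₗ m c' ∘ₗ M'.subtype)
        (fun _ _ _ => by ext; simp) (fun _ _ _ => by ext; simp)
        (fun _ _ _ => by ext; simp) (fun _ _ _ => by ext; simp)
    have hP := two_mul_finrank_le_of_alternating
      (K := K) (S := (C ⊓ ker (m c) : Submodule K V)) (V := M') A
      (fun c' v => by
        change β (m c v) (m c' v) = 0
        have e6 := hsym c' c'.2 v v
        rw [hβs (m c' v)] at e6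
        have e7 : 2 * β (m c v) (m c' v) = 0 := by linear_combination e6
        exact (mul_eq_zero.mp e7).resolve_left h2)
      (fun c' hc' v hv => by
        have hc'0 : (c' : V) ≠ 0 := fun h0 => hc' (Subtype.ext h0)
        have hv' : ∀ b, β (m c v) (m c' b) = 0 := by
          intro b
          obtain ⟨x, hx, y, hy, rfl⟩ := Submodule.mem_sup.mp
            (hM'.sup_eq_top ▸ Submodule.mem_top : b ∈ W₀.comap (m c) ⊔ M')
          rw [map_add, map_add, hsym c' c'.2 v x, (hW₀ _).mp hx, zero_add]
          exact hv ⟨y, hy⟩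
        have hvM : (v : V) ∈ W₀.comap (m c) := by
          refine LinearMap.ext fun w => ?_
          obtain ⟨b, rfl⟩ := h.surjective _ hc'0 w
          exact hv' b
        exact Subtype.ext (Submodule.disjoint_def.mp hM'.disjoint _ hvM v.2))
    omega
  · push Not at hcase
    have hCpos : C ≠ ⊥ := fun hb => by
      rw [hb, finrank_bot] at hC
      omega
    obtain ⟨c, hc, hc0⟩ := Submodule.exists_mem_ne_zero_of_ne_bot hCpos
    have e1 : (W₀.comap (m c)).map κ = ⊥ := by
      rw [eq_bot_iff]
      intro φ hφ
      by_contra hφ0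
      have := hκMle c hc hφ
      exact hcase c hc hc0 φ this.1 hφ0
        (mem_ker_formAt_flip.mpr fun w => LinearMap.congr_fun this.2 w)
    have e2 := hM c hc0
    have e3 := hκM c
    have e4 := hMC c
    rw [e1, finrank_bot] at e3
    have hdU := (h.dimensions hv₀).2.2.1
    have hinf : ker (t.formAt (κ v₀)).flip ⊓ C = ⊥ := by
      rw [eq_bot_iff]
      rintro x ⟨hx1, hx2⟩
      by_contra hx0
      exact hcase x hx2 hx0 _ hv₀B hv₀ hx1
    have hsup := Submodule.finrank_sup_add_finrank_inf_eq (ker (t.formAt (κ v₀)).flip) C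
    rw [hinf, finrank_bot] at hsup
    have hle := Submodule.finrank_le (ker (t.formAt (κ v₀)).flip ⊔ C)
    have htop : ker (t.formAt (κ v₀)).flip ⊔ C = ⊤ := Submodule.eq_top_of_finrank_eq (by omega)
    have hdec : ∀ v, ∃ u, u ∈ ker (t.formAt (κ v₀)).flip ∧ κ u = κ v := by
      intro v
      obtain ⟨u, hu, c', hc', rfl⟩ := Submodule.mem_sup.mp
        (htop ▸ Submodule.mem_top : v ∈ ker (t.formAt (κ v₀)).flip ⊔ C)
      exact ⟨u, hu, by rw [map_add, mem_ker.mp hc', add_zero]⟩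
    obtain ⟨a, ha, haκ⟩ := hdec v₀
    have ha0 : a ≠ 0 := by
      rintro rfl
      exact hv₀ (by rw [← haκ, map_zero])
    have e5 := h.two_mul_finrank_le B ha0 (by
      rintro _ ⟨v, rfl⟩ w
      obtain ⟨u, hu, huv⟩ := hdec v
      have e6 := hJ w a u
      have e7 : m a u = 0 := by
        rw [← mem_ker, h.ker_apply_eq hv₀ ha ha0]
        exact hu
      rw [e7, map_zero, haκ, mem_ker_formAt_flip.mp hu, sub_zero, huv] at e6
      exact e6)
    omega

end IsCaminaTriple

end LinearMap

open scoped commutatorElement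

namespace Subgroup

/-- The lower central series of the whole group, so that `lcs G 1` is the derived subgroup. -/
abbrev lcs (G : Type*) [Group G] (n : ℕ) : Subgroup G := (⊤ : Subgroup G).lowerCentralSeries n

variable {G : Type*} [Group G]

theorem commutator_commutator_le_of_rotate {A B C N : Subgroup G} [N.Normal]
    (h₁ : ⁅⁅B, C⁆, A⁆ ≤ N) (h₂ : ⁅⁅C, A⁆, B⁆ ≤ N) : ⁅⁅A, B⁆, C⁆ ≤ N := by
  rw [← QuotientGroup.ker_mk' N, ← map_eq_bot_iff, map_commutator, map_commutator] at *
  exact commutator_commutator_eq_bot_of_rotate h₁ h₂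

theorem commutator_lcs_le (j : ℕ) : ∀ i, ⁅lcs G j, lcs G i⁆ ≤ lcs G (j + i + 1) := by
  induction j with
  | zero =>
    intro i
    rw [commutator_comm, zero_add]
    exact le_rfl
  | succ j ih =>
    intro i
    refine commutator_commutator_le_of_rotate ?_ ?_
    · rw [commutator_comm ⊤, commutator_comm _ (lcs G j)]
      exact (ih (i + 1)).trans_eq (by congr 1; omega)
    · rw [commutator_comm (lcs G i)]
      refine (commutator_mono (ih i) le_rfl).trans_eq ?_
      rw [show j + 1 + i + 1 = j + i + 1 + 1 by omega]
      rfl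

theorem commutatorElement_mem_lcs {i j n : ℕ} {x y : G} (hx : x ∈ lcs G i) (hy : y ∈ lcs G j)
    (hn : n ≤ i + j + 1) : ⁅x, y⁆ ∈ lcs G n :=
  lowerCentralSeries_antitone _ hn
    (commutator_lcs_le i j (commutator_mem_commutator hx hy))

theorem mem_lcs_zero (x : G) : x ∈ lcs G 0 := mem_top x

theorem commutatorElement_mem_lcs_one (x y : G) : ⁅x, y⁆ ∈ lcs G 1 :=
  commutatorElement_mem_lcs (mem_lcs_zero x) (mem_lcs_zero y) le_rfl

theorem commutatorElement_mem_lcs_succ {n : ℕ} {x : G} (hx : x ∈ lcs G n) (y : G) :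
    ⁅x, y⁆ ∈ lcs G (n + 1) :=
  commutatorElement_mem_lcs hx (mem_lcs_zero y) le_rfl

theorem mem_lcs_of_mem_succ {n : ℕ} {x : G} (hx : x ∈ lcs G (n + 1)) : x ∈ lcs G n :=
  lowerCentralSeries_antitone _ n.le_succ hx

theorem conj_mem_lcs {n : ℕ} {x : G} (hx : x ∈ lcs G n) (a : G) : a * x * a⁻¹ ∈ lcs G n :=
  (inferInstance : (lcs G n).Normal).conj_mem x hx a

end Subgroup

open Subgroup

/-- A function which restricts to a homomorphism from the `n`-th lower central factor. -/
structure IsLCSHom {G A : Type*} [Group G] [AddCommGroup A] (n : ℕ) (χ : G → A) : Prop where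
  map_mul : ∀ {x y}, x ∈ lcs G n → y ∈ lcs G n → χ (x * y) = χ x + χ y
  map_eq_zero : ∀ {x}, x ∈ lcs G (n + 1) → χ x = 0

namespace IsLCSHom

variable {G A : Type*} [Group G] [AddCommGroup A] {n : ℕ} {χ : G → A}

theorem map_one (h : IsLCSHom n χ) : χ 1 = 0 := h.map_eq_zero (one_mem _)

theorem map_inv (h : IsLCSHom n χ) {x : G} (hx : x ∈ lcs G n) : χ x⁻¹ = -χ x := by
  rw [eq_neg_iff_add_eq_zero, ← h.map_mul (inv_mem hx) hx, inv_mul_cancel, h.map_one]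

theorem map_pow (h : IsLCSHom n χ) {x : G} (hx : x ∈ lcs G n) (k : ℕ) : χ (x ^ k) = k • χ x := by
  induction k with
  | zero => rw [pow_zero, zero_smul, h.map_one]
  | succ k ih => rw [pow_succ, h.map_mul (pow_mem hx k) hx, ih, succ_nsmul]

theorem map_conj (h : IsLCSHom n χ) {x : G} (hx : x ∈ lcs G n) (a : G) :
    χ (a * x * a⁻¹) = χ x := by
  have h1 : ⁅a, x⁆ ∈ lcs G (n + 1) :=
    commutatorElement_mem_lcs (mem_lcs_zero a) hx (by omega)
  rw [show a * x * a⁻¹ = ⁅a, x⁆ * x by rw [commutatorElement_def]; group,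
    h.map_mul (mem_lcs_of_mem_succ h1) hx, h.map_eq_zero h1, zero_add]

theorem map_commutator_swap (h : IsLCSHom n χ) {x y : G} (hxy : ⁅x, y⁆ ∈ lcs G n) :
    χ ⁅y, x⁆ = -χ ⁅x, y⁆ := by
  rw [← commutatorElement_inv, h.map_inv hxy]

theorem map_commutator_mul_left (h : IsLCSHom n χ) {x y z : G} (hx : ⁅x, z⁆ ∈ lcs G n)
    (hy : ⁅y, z⁆ ∈ lcs G n) : χ ⁅x * y, z⁆ = χ ⁅x, z⁆ + χ ⁅y, z⁆ := by
  rw [commutatorElement_mul_left_eq_conj_mul, h.map_mul (conj_mem_lcs hy x) hx, h.map_conj hy,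
    add_comm]

theorem map_commutator_mul_right (h : IsLCSHom n χ) {x y z : G} (hy : ⁅x, y⁆ ∈ lcs G n)
    (hz : ⁅x, z⁆ ∈ lcs G n) : χ ⁅x, y * z⁆ = χ ⁅x, y⁆ + χ ⁅x, z⁆ := by
  have : ⁅x, y⁆ * y * ⁅x, z⁆ * y⁻¹ = ⁅x, y⁆ * (y * ⁅x, z⁆ * y⁻¹) := by group
  rw [commutatorElement_mul_right_eq_mul_conj, this, h.map_mul hy (conj_mem_lcs hz y),
    h.map_conj hz]

theorem map_commutator_conj (h : IsLCSHom n χ) {x y z : G} (hz : ⁅x, z⁆ ∈ lcs G n)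
    (hyz : ⁅x, ⁅y, z⁆⁆ ∈ lcs G (n + 1)) : χ ⁅x, y * z * y⁻¹⁆ = χ ⁅x, z⁆ := by
  rw [show y * z * y⁻¹ = ⁅y, z⁆ * z by rw [commutatorElement_def]; group,
    h.map_commutator_mul_right (mem_lcs_of_mem_succ hyz) hz, h.map_eq_zero hyz, zero_add]

theorem map_hall_witt (h : IsLCSHom n χ) {x y z : G} (hx : ⁅⁅x, y⁆, z⁆ ∈ lcs G n)
    (hy : ⁅⁅y, z⁆, x⁆ ∈ lcs G n) (hz : ⁅⁅z, x⁆, y⁆ ∈ lcs G n)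
    (hx' : ⁅⁅x, y⁆, ⁅y, z⁆⁆ ∈ lcs G (n + 1)) (hy' : ⁅⁅y, z⁆, ⁅z, x⁆⁆ ∈ lcs G (n + 1))
    (hz' : ⁅⁅z, x⁆, ⁅x, y⁆⁆ ∈ lcs G (n + 1)) :
    χ ⁅⁅x, y⁆, z⁆ + χ ⁅⁅y, z⁆, x⁆ + χ ⁅⁅z, x⁆, y⁆ = 0 := by
  have hmem : ∀ {a b c : G}, ⁅a, c⁆ ∈ lcs G n → ⁅a, ⁅b, c⁆⁆ ∈ lcs G (n + 1) →
      ⁅a, b * c * b⁻¹⁆ ∈ lcs G n := by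
    intro a b c h1 h2
    have : ⁅a, ⁅b, c⁆⁆ * ⁅b, c⁆ * ⁅a, c⁆ * ⁅b, c⁆⁻¹ =
      ⁅a, ⁅b, c⁆⁆ * (⁅b, c⁆ * ⁅a, c⁆ * ⁅b, c⁆⁻¹) := by group
    rw [show b * c * b⁻¹ = ⁅b, c⁆ * c by rw [commutatorElement_def]; group,
      commutatorElement_mul_right_eq_mul_conj, this]
    exact mul_mem (mem_lcs_of_mem_succ h2) (conj_mem_lcs h1 _)
  have := congrArg χ (commutatorElement_commutatorElement_conj_mul x y z)
  rw [h.map_mul (mul_mem (hmem hx hx') (hmem hy hy')) (hmem hz hz'),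
    h.map_mul (hmem hx hx') (hmem hy hy'), h.map_commutator_conj hx hx',
    h.map_commutator_conj hy hy', h.map_commutator_conj hz hz', h.map_one] at this
  exact this

theorem map_commutator_pow_left (h : IsLCSHom n χ) {x y : G} (hxy : ∀ k : ℕ, ⁅x ^ k, y⁆ ∈ lcs G n)
    (k : ℕ) : χ ⁅x ^ k, y⁆ = k • χ ⁅x, y⁆ := by
  induction k with
  | zero => rw [pow_zero, commutatorElement_one_left, zero_smul, h.map_one]
  | succ k ih =>
    have h1 := hxy 1
    rw [pow_one] at h1
    rw [pow_succ, h.map_commutator_mul_left (hxy k) h1, ih, succ_nsmul]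

theorem map_commutator_inv_left (h : IsLCSHom n χ) {x y : G} (hx : ⁅x, y⁆ ∈ lcs G n)
    (hx' : ⁅x⁻¹, y⁆ ∈ lcs G n) : χ ⁅x⁻¹, y⁆ = -χ ⁅x, y⁆ := by
  rw [eq_neg_iff_add_eq_zero, ← h.map_commutator_mul_left hx' hx, inv_mul_cancel,
    commutatorElement_one_left, h.map_one]

theorem eq_zero_of_map_commutator {χ : G → A} (h : IsLCSHom (n + 1) χ)
    (hχ : ∀ x ∈ lcs G n, ∀ y, χ ⁅x, y⁆ = 0) {g : G} (hg : g ∈ lcs G (n + 1)) : χ g = 0 := by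
  let L : Subgroup G :=
    { carrier := {x | x ∈ lcs G (n + 1) ∧ χ x = 0}
      mul_mem' := fun hx hy =>
        ⟨mul_mem hx.1 hy.1, by rw [h.map_mul hx.1 hy.1, hx.2, hy.2, add_zero]⟩
      one_mem' := ⟨one_mem _, h.map_one⟩
      inv_mem' := fun hx => ⟨inv_mem hx.1, by rw [h.map_inv hx.1, hx.2, neg_zero]⟩ }
  have hle : lcs G (n + 1) ≤ L := commutator_le.mpr fun x hx y _ =>
    ⟨commutatorElement_mem_lcs_succ hx y, hχ x hx y⟩
  exact (hle hg).2

theorem comp (h : IsLCSHom n χ) {B : Type*} [AddCommGroup B] (f : A →+ B) :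
    IsLCSHom n fun x => f (χ x) where
  map_mul hx hy := by rw [h.map_mul hx hy, map_add]
  map_eq_zero hx := by rw [h.map_eq_zero hx, map_zero]

end IsLCSHom

section Factor

universe u

variable {G : Type u} [Group G]

/-- An identification of the `n`-th lower central factor with the additive group `A`. -/
structure IsLCSFactor {A : Type*} [AddCommGroup A] (n : ℕ) (π : G → A) : Prop
    extends IsLCSHom n π where
  mem_of_eq_zero : ∀ {x}, x ∈ lcs G n → π x = 0 → x ∈ lcs G (n + 1)
  exists_eq : ∀ a, ∃ x ∈ lcs G n, π x = a

theorem exists_isLCSFactor (G : Type u) [Group G] [Finite G] (n : ℕ) :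
    ∃ (A : Type u) (_ : AddCommGroup A) (_ : Finite A) (π : G → A), IsLCSFactor n π := by
  classical
  let N := (lcs G (n + 1)).subgroupOf (lcs G n)
  have hcomm : ∀ a b : lcs G n ⧸ N, a * b = b * a := by
    intro a b
    induction a, b using Quotient.inductionOn₂' with
    | h a b =>
      refine QuotientGroup.eq.mpr ?_
      rw [mem_subgroupOf]
      have : ((a * b)⁻¹ * (b * a) : lcs G n) = ⁅b⁻¹, a⁻¹⁆ := by
        rw [commutatorElement_def]; group
      rw [this]
      exact commutatorElement_mem_lcs (inv_mem b.2) (inv_mem a.2) (by omega)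
  let _ : CommGroup (lcs G n ⧸ N) := { (inferInstance : Group (lcs G n ⧸ N)) with mul_comm := hcomm }
  have hval : ∀ x (hx : x ∈ lcs G n),
      (if hx : x ∈ lcs G n then Additive.ofMul ((⟨x, hx⟩ : lcs G n) : lcs G n ⧸ N) else 0) =
        Additive.ofMul ((⟨x, hx⟩ : lcs G n) : lcs G n ⧸ N) := fun x hx => dif_pos hx
  have hzero : ∀ x (hx : x ∈ lcs G n),
      Additive.ofMul ((⟨x, hx⟩ : lcs G n) : lcs G n ⧸ N) = 0 ↔ x ∈ lcs G (n + 1) := fun x hx =>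
    (QuotientGroup.eq_one_iff _).trans mem_subgroupOf
  refine ⟨Additive (lcs G n ⧸ N), inferInstance, inferInstanceAs (Finite (lcs G n ⧸ N)),
    fun x => if hx : x ∈ lcs G n then Additive.ofMul ((⟨x, hx⟩ : lcs G n) : lcs G n ⧸ N) else 0,
    ⟨?_, ?_⟩, ?_, ?_⟩
  · intro x y hx hy
    rw [hval x hx, hval y hy, hval _ (mul_mem hx hy)]
    rfl
  · intro x hx
    rw [hval x (mem_lcs_of_mem_succ hx), hzero]
    exact hx
  · intro x hx h0
    rwa [hval x hx, hzero] at h0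
  · intro a
    obtain ⟨⟨x, hx⟩, rfl⟩ := QuotientGroup.mk_surjective a.toMul
    exact ⟨x, hx, hval x hx⟩

theorem IsLCSFactor.eq_iff {A : Type*} [AddCommGroup A] {n : ℕ} {π : G → A}
    (h : IsLCSFactor n π) {x : G} (hx : x ∈ lcs G n) : π x = 0 ↔ x ∈ lcs G (n + 1) :=
  ⟨h.mem_of_eq_zero hx, h.map_eq_zero⟩

/-- A factor of exponent `p` is a finite vector space over `ZMod p`. -/
theorem exists_isLCSFactor_zmod [Finite G] (p n : ℕ)
    (hp : ∀ x ∈ lcs G n, x ^ p ∈ lcs G (n + 1)) :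
    ∃ (A : Type u) (_ : AddCommGroup A) (_ : Module (ZMod p) A) (_ : Finite A) (π : G → A),
      IsLCSFactor n π := by
  obtain ⟨A, _, _, π, hπ⟩ := exists_isLCSFactor G n
  refine ⟨A, inferInstance, AddCommGroup.zmodModule fun a => ?_, inferInstance, π, hπ⟩
  obtain ⟨x, hx, rfl⟩ := hπ.exists_eq a
  rw [← hπ.map_pow hx, hπ.eq_iff (pow_mem hx p)]
  exact hp x hx

theorem exists_addMonoidHom_zmod_ne_zero (p : ℕ) [Fact p.Prime] {B : Type*} [AddCommGroup B]
    [Module (ZMod p) B] {b : B} (hb : b ≠ 0) : ∃ f : B →+ ZMod p, f b ≠ 0 := by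
  by_contra! h0
  exact hb ((Module.forall_dual_apply_eq_zero_iff (ZMod p) b).mp fun f => h0 f.toAddMonoidHom)

theorem exists_isLCSHom_ne_zero [Finite G] {p : ℕ} [Fact p.Prime] (hG : IsPGroup p G) {n : ℕ}
    (hn : lcs G n ≠ lcs G (n + 1)) :
    ∃ χ : G → ZMod p, IsLCSHom n χ ∧ ∃ x ∈ lcs G n, χ x ≠ 0 := by
  obtain ⟨A, _, _, π, hπ⟩ := exists_isLCSFactor G n
  obtain ⟨x₀, hx₀, hx₀'⟩ : ∃ x ∈ lcs G n, x ∉ lcs G (n + 1) := by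
    by_contra! hle
    exact hn (le_antisymm hle (Subgroup.lowerCentralSeries_antitone _ n.le_succ))
  let P : AddSubgroup A := (nsmulAddMonoidHom p : A →+ A).range
  let _ : Module (ZMod p) (A ⧸ P) := AddCommGroup.zmodModule fun a => by
    obtain ⟨a, rfl⟩ := QuotientAddGroup.mk_surjective a
    exact (QuotientAddGroup.eq_zero_iff _).mpr ⟨a, rfl⟩
  obtain ⟨a, ha⟩ : ∃ a : A, a ∉ P := by
    by_contra! hP
    obtain ⟨j, hj⟩ : ∃ j, ∀ a : A, p ^ j • a = 0 := by
      obtain ⟨j, hj⟩ := IsPGroup.iff_card.mp hG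
      refine ⟨j, fun a => ?_⟩
      obtain ⟨x, hx, rfl⟩ := hπ.exists_eq a
      rw [← hj, ← hπ.map_pow hx, pow_card_eq_one', hπ.map_one]
    have hdiv : ∀ (i : ℕ) (a : A), ∃ b, p ^ i • b = a := by
      intro i
      induction i with
      | zero => exact fun a => ⟨a, by rw [pow_zero, one_smul]⟩
      | succ i ih =>
        intro a
        obtain ⟨b, rfl⟩ := ih a
        obtain ⟨c, rfl⟩ := hP b
        exact ⟨c, by rw [pow_succ, mul_smul]; rfl⟩
    obtain ⟨b, hb⟩ := hdiv j (π x₀)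
    exact hx₀' (hπ.mem_of_eq_zero hx₀ (by rw [← hb, hj]))
  obtain ⟨f, hf⟩ := exists_addMonoidHom_zmod_ne_zero p
    (mt (QuotientAddGroup.eq_zero_iff (N := P) a).mp ha)
  obtain ⟨x, hx, rfl⟩ := hπ.exists_eq a
  exact ⟨_, hπ.toIsLCSHom.comp (f.comp (QuotientAddGroup.mk' P)), x, hx, hf⟩

end Factor

section Lift

variable {G V V' Z : Type*} [Group G] {p : ℕ} [AddCommGroup V] [AddCommGroup V'] [AddCommGroup Z]
  [Module (ZMod p) V] [Module (ZMod p) V'] [Module (ZMod p) Z] {H H' : Subgroup G}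
  {π : G → V} {π' : G → V'}

theorem exists_linearMap_lift (hπ : ∀ x ∈ H, ∀ y ∈ H, π (x * y) = π x + π y)
    (hsurj : ∀ v, ∃ x ∈ H, π x = v) {F : G → Z}
    (hF : ∀ x ∈ H, ∀ y ∈ H, F (x * y) = F x + F y) (hker : ∀ x ∈ H, π x = 0 → F x = 0) :
    ∃ f : V →ₗ[ZMod p] Z, ∀ x ∈ H, f (π x) = F x := by
  have hwd : ∀ x ∈ H, ∀ y ∈ H, π x = π y → F x = F y := by
    intro x hx y hy hxy
    have hmem := mul_mem hx (inv_mem hy)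
    have hπ₁ := hπ _ hmem _ hy
    have hF₁ := hF _ hmem _ hy
    rw [inv_mul_cancel_right] at hπ₁ hF₁
    rw [hF₁, hker _ hmem (right_eq_add.mp (hxy.symm.trans hπ₁)), zero_add]
  choose s hs hπs using hsurj
  let f : V →+ Z := AddMonoidHom.mk' (fun v => F (s v)) fun a b => by
    rw [← hF _ (hs a) _ (hs b)]
    exact hwd _ (hs _) _ (mul_mem (hs a) (hs b)) (by rw [hπs, hπ _ (hs a) _ (hs b), hπs, hπs])
  exact ⟨f.toZModLinearMap p, fun x hx => hwd _ (hs _) _ hx (hπs _)⟩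

theorem exists_linearMap₂_lift (hπ : ∀ x ∈ H, ∀ y ∈ H, π (x * y) = π x + π y)
    (hsurj : ∀ v, ∃ x ∈ H, π x = v) (hπ' : ∀ x ∈ H', ∀ y ∈ H', π' (x * y) = π' x + π' y)
    (hsurj' : ∀ v, ∃ x ∈ H', π' x = v) {F : G → G → Z}
    (hF : ∀ x ∈ H, ∀ y ∈ H, ∀ z ∈ H', F (x * y) z = F x z + F y z)
    (hF' : ∀ z ∈ H, ∀ x ∈ H', ∀ y ∈ H', F z (x * y) = F z x + F z y)
    (hker : ∀ x ∈ H, ∀ y ∈ H', π x = 0 → F x y = 0)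
    (hker' : ∀ x ∈ H, ∀ y ∈ H', π' y = 0 → F x y = 0) :
    ∃ f : V →ₗ[ZMod p] V' →ₗ[ZMod p] Z, ∀ x ∈ H, ∀ y ∈ H', f (π x) (π' y) = F x y := by
  classical
  have h1 : ∀ x ∈ H, ∃ f : V' →ₗ[ZMod p] Z, ∀ y ∈ H', f (π' y) = F x y := fun x hx =>
    exists_linearMap_lift hπ' hsurj' (hF' x hx) fun y hy => hker' x hx y hy
  choose! f hf using h1
  obtain ⟨g, hg⟩ := exists_linearMap_lift (p := p) hπ hsurj (F := f)
    (fun x hx y hy => LinearMap.ext fun v => by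
      obtain ⟨z, hz, rfl⟩ := hsurj' v
      rw [LinearMap.add_apply, hf _ (mul_mem hx hy) z hz, hf x hx z hz, hf y hy z hz,
        hF x hx y hy z hz])
    (fun x hx h0 => LinearMap.ext fun v => by
      obtain ⟨z, hz, rfl⟩ := hsurj' v
      rw [hf x hx z hz, hker x hx z hz h0, LinearMap.zero_apply])
  exact ⟨g, fun x hx y hy => by rw [hg x hx, hf x hx y hy]⟩

end Lift

namespace IsCaminaGroup

variable {G : Type*} [Group G]

theorem exists_commutator_eq_left (hG : IsCaminaGroup G) {x g : G} (hx : x ∉ lcs G 1)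
    (hg : g ∈ lcs G 1) : ∃ y : G, ⁅y, x⁆ = g := by
  have hN : (lcs G 1).Normal := inferInstance
  have : g * x ∈ conjugatesOf x := by
    rw [hG x hx, Set.mem_smul_set_iff_inv_smul_mem]
    have := hN.conj_mem g hg x⁻¹
    rwa [inv_inv, mul_assoc] at this
  obtain ⟨y, hy⟩ := isConj_iff.mp this
  exact ⟨y, by rw [commutatorElement_def, hy, mul_inv_cancel_right]⟩

theorem exists_commutator_eq (hG : IsCaminaGroup G) {x g : G} (hx : x ∉ lcs G 1)
    (hg : g ∈ lcs G 1) : ∃ y : G, ⁅x, y⁆ = g := by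
  obtain ⟨y, hy⟩ := hG.exists_commutator_eq_left hx (inv_mem hg)
  exact ⟨y, by rw [← commutatorElement_inv, hy, inv_inv]⟩

end IsCaminaGroup

section PGroup

variable {G : Type*} [Group G] [Finite G] {p : ℕ} [Fact p.Prime]

theorem IsPGroup.lcs_succ_ne (hpG : IsPGroup p G) {n : ℕ} (hn : lcs G n ≠ ⊥) :
    lcs G n ≠ lcs G (n + 1) := by
  intro h
  obtain ⟨k, hk⟩ := Subgroup.nilpotent_iff_lowerCentralSeries.mp hpG.isNilpotent
  have key : ∀ j, lcs G (n + j) = lcs G n := by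
    intro j
    induction j with
    | zero => rfl
    | succ j ih =>
      have : lcs G (n + j + 1) = ⁅lcs G (n + j), ⊤⁆ := rfl
      rw [← add_assoc, this, ih]
      exact h.symm
  exact hn (le_bot_iff.mp ((key k).symm.trans_le
    ((Subgroup.lowerCentralSeries_antitone _ (Nat.le_add_left k n)).trans_eq hk)))

theorem IsCaminaGroup.pow_mem_lcs_one (hG : IsCaminaGroup G) (hpG : IsPGroup p G)
    (h1 : lcs G 1 ≠ ⊥) (x : G) : x ^ p ∈ lcs G 1 := by
  obtain ⟨χ, hχ, g, hg, hgχ⟩ := exists_isLCSHom_ne_zero hpG (hpG.lcs_succ_ne h1)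
  by_contra hx
  obtain ⟨y, rfl⟩ := hG.exists_commutator_eq hx hg
  refine hgχ ?_
  rw [hχ.map_commutator_pow_left (fun k => commutatorElement_mem_lcs_one (x ^ k) y)]
  simp

theorem IsCaminaGroup.pow_mem_lcs_succ (hG : IsCaminaGroup G) (hpG : IsPGroup p G)
    (h1 : lcs G 1 ≠ ⊥) {n : ℕ} : ∀ {x}, x ∈ lcs G n → x ^ p ∈ lcs G (n + 1) := by
  induction n with
  | zero => exact fun {x} _ => hG.pow_mem_lcs_one hpG h1 x
  | succ n ih =>
    intro x hx
    obtain ⟨A, _, _, q, hq⟩ := exists_isLCSFactor G (n + 1)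
    refine hq.mem_of_eq_zero (pow_mem hx p) ?_
    rw [hq.map_pow hx]
    refine (hq.toIsLCSHom.comp (nsmulAddMonoidHom p)).eq_zero_of_map_commutator
      (fun a ha y => ?_) hx
    rw [nsmulAddMonoidHom_apply, ← hq.map_commutator_pow_left
      (fun k => commutatorElement_mem_lcs_succ (pow_mem ha k) y)]
    exact hq.map_eq_zero (commutatorElement_mem_lcs_succ (ih ha) y)

end PGroup

/-- The homomorphisms from the `n`-th lower central factor to `ZMod p`, extended by zero. -/
def lcsDual (p : ℕ) (G : Type*) [Group G] (n : ℕ) : Submodule (ZMod p) (G → ZMod p) where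
  carrier := {χ | IsLCSHom n χ ∧ ∀ x, x ∉ lcs G n → χ x = 0}
  add_mem' := fun {χ ψ} hχ hψ =>
    ⟨⟨fun hx hy => by
        simp only [Pi.add_apply, hχ.1.map_mul hx hy, hψ.1.map_mul hx hy]
        abel,
      fun hx => by rw [Pi.add_apply, hχ.1.map_eq_zero hx, hψ.1.map_eq_zero hx, add_zero]⟩,
    fun x hx => by rw [Pi.add_apply, hχ.2 x hx, hψ.2 x hx, add_zero]⟩
  zero_mem' := ⟨⟨fun _ _ => (add_zero 0).symm, fun _ => rfl⟩, fun _ _ => rfl⟩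
  smul_mem' := fun c χ hχ =>
    ⟨⟨fun hx hy => by simp only [Pi.smul_apply, hχ.1.map_mul hx hy, smul_add],
      fun hx => by rw [Pi.smul_apply, hχ.1.map_eq_zero hx, smul_zero]⟩,
    fun x hx => by rw [Pi.smul_apply, hχ.2 x hx, smul_zero]⟩

namespace lcsDual

variable {G : Type*} [Group G] {p n : ℕ}

theorem isLCSHom (φ : lcsDual p G n) : IsLCSHom n φ.1 := φ.2.1

theorem ext {φ ψ : lcsDual p G n} (h : ∀ g ∈ lcs G n, φ.1 g = ψ.1 g) : φ = ψ := by
  refine Subtype.ext (funext fun g => ?_)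
  by_cases hg : g ∈ lcs G n
  · exact h g hg
  · rw [φ.2.2 g hg, ψ.2.2 g hg]

theorem exists_ne_zero {φ : lcsDual p G n} (hφ : φ ≠ 0) : ∃ g ∈ lcs G n, φ.1 g ≠ 0 := by
  by_contra! h
  exact hφ (ext h)

theorem exists_eq_of_isLCSHom {χ : G → ZMod p} (hχ : IsLCSHom n χ) :
    ∃ φ : lcsDual p G n, ∀ g ∈ lcs G n, φ.1 g = χ g := by
  classical
  refine ⟨⟨fun g => if g ∈ lcs G n then χ g else 0, ⟨?_, ?_⟩, ?_⟩, ?_⟩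
  · intro x y hx hy
    simp only [if_pos hx, if_pos hy, if_pos (mul_mem hx hy), hχ.map_mul hx hy]
  · intro x hx
    simp only [if_pos (mem_lcs_of_mem_succ hx), hχ.map_eq_zero hx]
  · exact fun x hx => if_neg hx
  · exact fun x hx => if_pos hx

/-- Evaluation at a group element. -/
def eval (g : G) : lcsDual p G n →ₗ[ZMod p] ZMod p := LinearMap.proj g ∘ₗ (lcsDual p G n).subtype

theorem eval_eq_zero {x : G} (hx : x ∈ lcs G (n + 1)) :
    (eval x : lcsDual p G n →ₗ[ZMod p] ZMod p) = 0 :=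
  LinearMap.ext fun φ => (lcsDual.isLCSHom φ).map_eq_zero hx

theorem eval_commutator_mul_left {x y z : G} (hx : ⁅x, z⁆ ∈ lcs G n) (hy : ⁅y, z⁆ ∈ lcs G n) :
    (eval ⁅x * y, z⁆ : lcsDual p G n →ₗ[ZMod p] ZMod p) = eval ⁅x, z⁆ + eval ⁅y, z⁆ :=
  LinearMap.ext fun φ => (lcsDual.isLCSHom φ).map_commutator_mul_left hx hy

theorem eval_commutator_mul_right {x y z : G} (hy : ⁅x, y⁆ ∈ lcs G n) (hz : ⁅x, z⁆ ∈ lcs G n) :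
    (eval ⁅x, y * z⁆ : lcsDual p G n →ₗ[ZMod p] ZMod p) = eval ⁅x, y⁆ + eval ⁅x, z⁆ :=
  LinearMap.ext fun φ => (lcsDual.isLCSHom φ).map_commutator_mul_right hy hz

end lcsDual

/-- The commutator maps of a Camina `p`-group on its first lower central factors. -/
structure IsCaminaModel {G V W : Type*} [Group G] {p : ℕ} [Fact p.Prime] [AddCommGroup V]
    [Module (ZMod p) V] [AddCommGroup W] [Module (ZMod p) W] (π : G → V) (πW : G → W)
    (m : V →ₗ[ZMod p] V →ₗ[ZMod p] W)
    (t : W →ₗ[ZMod p] V →ₗ[ZMod p] lcsDual p G 2 →ₗ[ZMod p] ZMod p) : Prop where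
  factor_zero : IsLCSFactor 0 π
  factor_one : IsLCSFactor 1 πW
  apply_apply : ∀ x y, m (π x) (π y) = πW ⁅x, y⁆
  apply_apply_apply : ∀ {w}, w ∈ lcs G 1 → ∀ x φ, t (πW w) (π x) φ = φ.1 ⁅w, x⁆

namespace IsCaminaModel

variable {G V W : Type*} [Group G] {p : ℕ} [Fact p.Prime] [AddCommGroup V] [Module (ZMod p) V]
  [AddCommGroup W] [Module (ZMod p) W] {π : G → V} {πW : G → W} {m : V →ₗ[ZMod p] V →ₗ[ZMod p] W}
  {t : W →ₗ[ZMod p] V →ₗ[ZMod p] lcsDual p G 2 →ₗ[ZMod p] ZMod p}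

theorem map_mul (h : IsCaminaModel π πW m t) (x y : G) : π (x * y) = π x + π y :=
  h.factor_zero.map_mul (mem_lcs_zero x) (mem_lcs_zero y)

theorem eq_zero_iff (h : IsCaminaModel π πW m t) {x : G} : π x = 0 ↔ x ∈ lcs G 1 :=
  h.factor_zero.eq_iff (mem_lcs_zero x)

theorem surjective (h : IsCaminaModel π πW m t) : Function.Surjective π := fun v =>
  let ⟨x, _, hx⟩ := h.factor_zero.exists_eq v
  ⟨x, hx⟩

theorem bound [Finite V] [Finite G] (h : IsCaminaModel π πW m t) (hG : IsCaminaGroup G)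
    (S : Submodule (ZMod p) (lcsDual p G 2)) (U : Submodule (ZMod p) V) (hU : U ≠ ⊥)
    (hker : ∀ u ∈ U, u ≠ 0 → LinearMap.ker (m u) = U)
    (hS : ∀ s ∈ S, ∀ w, ∀ u ∈ U, t w u s = 0) :
    2 * Module.finrank (ZMod p) S ≤ Module.finrank (ZMod p) U := by
  classical
  let H : Subgroup G :=
    { carrier := {x | π x ∈ U}
      mul_mem' := fun {x y} hx hy => by
        rw [Set.mem_ofPred_eq, h.map_mul]
        exact U.add_mem hx hy
      one_mem' := by
        rw [Set.mem_ofPred_eq, h.factor_zero.map_one]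
        exact U.zero_mem
      inv_mem' := fun {x} hx => by
        rw [Set.mem_ofPred_eq, h.factor_zero.map_inv (mem_lcs_zero x)]
        exact U.neg_mem hx }
  let π' : G → U := fun x => if hx : π x ∈ U then ⟨π x, hx⟩ else 0
  have hπ' : ∀ x (hx : x ∈ H), π' x = ⟨π x, hx⟩ := fun x hx => dif_pos hx
  have hπ₀ : ∀ x ∈ H, π' x = 0 ↔ x ∈ lcs G 1 := fun x hx => by
    rw [hπ' x hx, ← h.eq_zero_iff, Submodule.mk_eq_zero]
  have hsurj : ∀ u, ∃ x ∈ H, π' x = u := by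
    rintro ⟨u, hu⟩
    obtain ⟨x, rfl⟩ := h.surjective u
    exact ⟨x, hu, hπ' x hu⟩
  have hmul : ∀ x ∈ H, ∀ y ∈ H, π' (x * y) = π' x + π' y := fun x hx y hy => by
    rw [hπ' _ (mul_mem hx hy), hπ' x hx, hπ' y hy]
    exact Subtype.ext (h.map_mul x y)
  have hmem : ∀ {x y}, x ∈ H → y ∈ H → ⁅x, y⁆ ∈ lcs G 2 := by
    intro x y hx hy
    by_cases hx0 : π x = 0
    · exact commutatorElement_mem_lcs_succ (h.eq_zero_iff.mp hx0) y
    · refine h.factor_one.mem_of_eq_zero (commutatorElement_mem_lcs_one x y) ?_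
      rw [← h.apply_apply, ← LinearMap.mem_ker, hker _ hx hx0]
      exact hy
  have hvan : ∀ x ∈ H, ∀ w ∈ lcs G 1, ∀ s : S, s.1.1 ⁅w, x⁆ = 0 := fun x hx w hw s => by
    rw [← h.apply_apply_apply hw]
    exact hS _ s.2 _ _ hx
  obtain ⟨T, hT⟩ := exists_linearMap₂_lift (p := p) hmul hsurj hmul hsurj
    (F := fun x y => lcsDual.eval ⁅x, y⁆ ∘ₗ S.subtype)
    (fun x hx y hy z hz => by
      rw [lcsDual.eval_commutator_mul_left (hmem hx hz) (hmem hy hz), LinearMap.add_comp])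
    (fun z hz x hx y hy => by
      rw [lcsDual.eval_commutator_mul_right (hmem hz hx) (hmem hz hy), LinearMap.add_comp])
    (fun x hx y hy h0 => LinearMap.ext fun s => hvan y hy x ((hπ₀ x hx).mp h0) s)
    (fun x hx y hy h0 => LinearMap.ext fun s => by
      have := hvan x hx y ((hπ₀ y hy).mp h0) s
      exact ((lcsDual.isLCSHom s.1).map_commutator_swap (hmem hy hx)).trans (by rw [this, neg_zero]; rfl))
  have : Nontrivial U := U.nontrivial_iff_ne_bot.mpr hU
  refine two_mul_finrank_le_of_alternating (K := ZMod p) (S := S) (V := U)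
    (LinearMap.lflip.toLinearMap ∘ₗ T).flip ?_ ?_
  · intro s v
    obtain ⟨x, hx, rfl⟩ := hsurj v
    have : T (π' x) (π' x) s = 0 := by
      rw [hT x hx x hx, commutatorElement_self]
      exact (lcsDual.isLCSHom s.1).map_one
    exact this
  · intro s hs v hv
    obtain ⟨g, hg, hgs⟩ := lcsDual.exists_ne_zero (p := p) (mt (Submodule.coe_eq_zero).mp hs)
    obtain ⟨x, hx, rfl⟩ := hsurj v
    by_contra h0
    obtain ⟨y, rfl⟩ := hG.exists_commutator_eq (mt (hπ₀ x hx).mpr h0) (mem_lcs_of_mem_succ hg)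
    have hx0 : π x ≠ 0 := fun h' => h0 ((hπ₀ x hx).mpr (h.eq_zero_iff.mp h'))
    have hy : y ∈ H := by
      have : π y ∈ LinearMap.ker (m (π x)) := by
        rw [LinearMap.mem_ker, h.apply_apply, h.factor_one.eq_iff (commutatorElement_mem_lcs_one x y)]
        exact hg
      rwa [hker _ hx hx0] at this
    refine hgs ?_
    have : T (π' x) (π' y) s = 0 := hv (π' y)
    rw [hT x hx y hy] at this
    exact this

theorem isCaminaTriple [Finite V] [Finite G] (h : IsCaminaModel π πW m t)
    (hG : IsCaminaGroup G) : LinearMap.IsCaminaTriple m t where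
  alternating v := by
    obtain ⟨x, rfl⟩ := h.surjective v
    rw [h.apply_apply, commutatorElement_self, h.factor_one.map_one]
  surjective v hv w := by
    obtain ⟨x, rfl⟩ := h.surjective v
    obtain ⟨g, hg, rfl⟩ := h.factor_one.exists_eq w
    obtain ⟨y, rfl⟩ := hG.exists_commutator_eq (mt h.eq_zero_iff.mpr hv) hg
    exact ⟨π y, h.apply_apply x y⟩
  injective φ hφ := by
    by_contra! h0
    obtain ⟨g, hg, hgφ⟩ := lcsDual.exists_ne_zero hφ
    refine hgφ ((lcsDual.isLCSHom φ).eq_zero_of_map_commutator (fun w hw x => ?_) hg)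
    rw [← h.apply_apply_apply hw, h0]
  jacobi a b c φ := by
    obtain ⟨x, rfl⟩ := h.surjective a
    obtain ⟨y, rfl⟩ := h.surjective b
    obtain ⟨z, rfl⟩ := h.surjective c
    have h1 := commutatorElement_mem_lcs_one (G := G)
    simp only [h.apply_apply, h.apply_apply_apply (h1 _ _)]
    exact (lcsDual.isLCSHom φ).map_hall_witt (commutatorElement_mem_lcs_succ (h1 _ _) _)
      (commutatorElement_mem_lcs_succ (h1 _ _) _) (commutatorElement_mem_lcs_succ (h1 _ _) _)
      (commutatorElement_mem_lcs (h1 _ _) (h1 _ _) le_rfl)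
      (commutatorElement_mem_lcs (h1 _ _) (h1 _ _) le_rfl)
      (commutatorElement_mem_lcs (h1 _ _) (h1 _ _) le_rfl)
  bound := h.bound hG

end IsCaminaModel

theorem IsCaminaGroup.exists_isCaminaModel.{u} {G : Type u} [Group G] [Finite G] {p : ℕ}
    [Fact p.Prime] (hG : IsCaminaGroup G) (hpG : IsPGroup p G) (h1 : lcs G 1 ≠ ⊥) :
    ∃ (V W : Type u) (_ : AddCommGroup V) (_ : AddCommGroup W) (_ : Module (ZMod p) V)
      (_ : Module (ZMod p) W) (_ : Finite V) (_ : Finite W) (π : G → V) (πW : G → W)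
      (m : V →ₗ[ZMod p] V →ₗ[ZMod p] W)
      (t : W →ₗ[ZMod p] V →ₗ[ZMod p] lcsDual p G 2 →ₗ[ZMod p] ZMod p),
      IsCaminaModel π πW m t := by
  obtain ⟨V, _, _, _, π, hπ⟩ := exists_isLCSFactor_zmod (G := G) p 0
    fun x hx => hG.pow_mem_lcs_succ hpG h1 hx
  obtain ⟨W, _, _, _, πW, hπW⟩ := exists_isLCSFactor_zmod (G := G) p 1
    fun x hx => hG.pow_mem_lcs_succ hpG h1 hx
  have hc := commutatorElement_mem_lcs_one (G := G)
  have hc' : ∀ {w : G}, w ∈ lcs G 1 → ∀ x, ⁅w, x⁆ ∈ lcs G 2 := commutatorElement_mem_lcs_succ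
  obtain ⟨m, hm⟩ := exists_linearMap₂_lift (p := p) (fun x hx y hy => hπ.map_mul hx hy)
    hπ.exists_eq (fun x hx y hy => hπ.map_mul hx hy) hπ.exists_eq (F := fun x y => πW ⁅x, y⁆)
    (fun x _ y _ z _ => hπW.map_commutator_mul_left (hc x z) (hc y z))
    (fun z _ x _ y _ => hπW.map_commutator_mul_right (hc z x) (hc z y))
    (fun x hx y hy h0 => hπW.map_eq_zero
      (commutatorElement_mem_lcs (hπ.mem_of_eq_zero hx h0) hy le_rfl))
    (fun x hx y hy h0 => hπW.map_eq_zero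
      (commutatorElement_mem_lcs hx (hπ.mem_of_eq_zero hy h0) le_rfl))
  obtain ⟨t, ht⟩ := exists_linearMap₂_lift (p := p) (fun x hx y hy => hπW.map_mul hx hy)
    hπW.exists_eq (fun x hx y hy => hπ.map_mul hx hy) hπ.exists_eq
    (F := fun w y => (lcsDual.eval ⁅w, y⁆ : lcsDual p G 2 →ₗ[ZMod p] ZMod p))
    (fun x hx y hy z _ => lcsDual.eval_commutator_mul_left (hc' hx z) (hc' hy z))
    (fun z hz x _ y _ => lcsDual.eval_commutator_mul_right (hc' hz x) (hc' hz y))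
    (fun x hx y hy h0 => lcsDual.eval_eq_zero
      (commutatorElement_mem_lcs (hπW.mem_of_eq_zero hx h0) hy le_rfl))
    (fun x hx y hy h0 => lcsDual.eval_eq_zero
      (commutatorElement_mem_lcs hx (hπ.mem_of_eq_zero hy h0) le_rfl))
  exact ⟨V, W, _, _, _, _, ‹_›, ‹_›, π, πW, m, t, hπ, hπW,
    fun x y => hm x (mem_lcs_zero x) y (mem_lcs_zero y),
    fun hw x φ => by rw [ht _ hw x (mem_lcs_zero x)]; rfl⟩

namespace IsCaminaModel

variable {G V W : Type*} [Group G] [Finite G] [AddCommGroup V] [AddCommGroup W] [Finite V]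
  [Finite W]

theorem false_of_two [Module (ZMod 2) V] [Module (ZMod 2) W] {π : G → V} {πW : G → W}
    {m : V →ₗ[ZMod 2] V →ₗ[ZMod 2] W}
    {t : W →ₗ[ZMod 2] V →ₗ[ZMod 2] lcsDual 2 G 2 →ₗ[ZMod 2] ZMod 2}
    (h : IsCaminaModel π πW m t) (hG : IsCaminaGroup G) (hpG : IsPGroup 2 G)
    (h1 : lcs G 1 ≠ ⊥) (h2 : lcs G 2 ≠ lcs G 3) : False := by
  obtain ⟨χ, hχ, g, hg, hgχ⟩ := exists_isLCSHom_ne_zero hpG h2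
  obtain ⟨φ, hφ⟩ := lcsDual.exists_eq_of_isLCSHom hχ
  have hφh := lcsDual.isLCSHom φ
  have hsq : ∀ {n x}, x ∈ lcs G n → x * x ∈ lcs G (n + 1) := fun {n x} hx => by
    rw [← sq]
    exact hG.pow_mem_lcs_succ hpG h1 hx
  obtain ⟨σ, hσ⟩ := exists_linearMap_lift (p := 2) (fun x hx y hy => h.factor_one.map_mul hx hy)
    h.factor_one.exists_eq (F := fun w => φ.1 (w * w))
    (fun x hx y hy => by
      have hc : ⁅y, x⁆ ∈ lcs G 3 := commutatorElement_mem_lcs hy hx le_rfl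
      have hc' := conj_mem_lcs hc x
      rw [show x * y * (x * y) = x * ⁅y, x⁆ * x⁻¹ * (x * x * (y * y)) by
          rw [commutatorElement_def]; group,
        hφh.map_mul (mem_lcs_of_mem_succ hc') (mul_mem (hsq hx) (hsq hy)), hφh.map_eq_zero hc',
        hφh.map_mul (hsq hx) (hsq hy), zero_add])
    (fun x hx h0 => hφh.map_eq_zero (hsq (h.factor_one.mem_of_eq_zero hx h0)))
  have hc := commutatorElement_mem_lcs_one (G := G)
  have h0 : φ = 0 := by
    refine (h.isCaminaTriple hG).eq_zero_of_square σ fun c hcφ a => ?_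
    obtain ⟨x, rfl⟩ := h.surjective c
    obtain ⟨y, rfl⟩ := h.surjective a
    rw [h.apply_apply, h.apply_apply_apply (hc x y), hσ _ (hc x y)]
    have hy := hsq (mem_lcs_zero y)
    have hyx := commutatorElement_mem_lcs_succ hy x
    have h3 : φ.1 ⁅x, y * y⁆ = 0 := by
      rw [hφh.map_commutator_swap hyx, ← h.apply_apply_apply hy,
        LinearMap.mem_ker_formAt_flip.mp hcφ, neg_zero]
    have hg2 := commutatorElement_mem_lcs_succ (hc x y) y
    have hg2' : ⁅y, ⁅x, y⁆⁆ ∈ lcs G 2 := by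
      rw [← commutatorElement_inv]
      exact inv_mem hg2
    rw [show ⁅x, y * y⁆ = ⁅x, y⁆ * ⁅y, ⁅x, y⁆⁆ * ⁅x, y⁆⁻¹ * (⁅x, y⁆ * ⁅x, y⁆) by
        simp only [commutatorElement_def]; group,
      hφh.map_mul (conj_mem_lcs hg2' _) (hsq (hc x y)), hφh.map_conj hg2',
      hφh.map_commutator_swap hg2, neg_add_eq_zero] at h3
    exact h3.symm
  exact hgχ (by rw [← hφ g hg, h0]; rfl)

variable {p : ℕ} [Fact p.Prime] [Module (ZMod p) V] [Module (ZMod p) W] {π : G → V} {πW : G → W}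
  {m : V →ₗ[ZMod p] V →ₗ[ZMod p] W}
  {t : W →ₗ[ZMod p] V →ₗ[ZMod p] lcsDual p G 2 →ₗ[ZMod p] ZMod p}

theorem false_of_ne_two (h : IsCaminaModel π πW m t) (hG : IsCaminaGroup G)
    (hpG : IsPGroup p G) (hp : p ≠ 2) (h3 : lcs G 3 ≠ lcs G 4) : False := by
  obtain ⟨ψ, hψ, g, hg, hgψ⟩ := exists_isLCSHom_ne_zero hpG h3
  have hc := commutatorElement_mem_lcs_one (G := G)
  have h2 : (2 : ZMod p) ≠ 0 := fun h0 => hp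
    ((Nat.prime_dvd_prime_iff_eq Fact.out Nat.prime_two).mp
      ((ZMod.natCast_eq_zero_iff 2 p).mp (by exact_mod_cast h0)))
  have hχ : ∀ y, IsLCSHom 2 fun g : G => ψ ⁅g, y⁆ := fun y =>
    ⟨fun ha hb => hψ.map_commutator_mul_left (commutatorElement_mem_lcs_succ ha y)
      (commutatorElement_mem_lcs_succ hb y),
    fun ha => hψ.map_eq_zero (commutatorElement_mem_lcs_succ ha y)⟩
  choose φ hφ using fun y => lcsDual.exists_eq_of_isLCSHom (hχ y)
  obtain ⟨κ, hκ⟩ := exists_linearMap_lift (p := p) (fun x hx y hy => h.factor_zero.map_mul hx hy)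
    h.factor_zero.exists_eq (F := φ)
    (fun x _ y _ => lcsDual.ext fun a ha => by
      rw [Submodule.coe_add, Pi.add_apply, hφ _ a ha, hφ _ a ha, hφ _ a ha]
      exact hψ.map_commutator_mul_right (commutatorElement_mem_lcs_succ ha x)
        (commutatorElement_mem_lcs_succ ha y))
    (fun x hx h0 => lcsDual.ext fun a ha => (hφ _ a ha).trans
      (hψ.map_eq_zero (commutatorElement_mem_lcs ha (h.factor_zero.mem_of_eq_zero hx h0) le_rfl)))
  have hκ : ∀ y, κ (π y) = φ y := fun y => hκ y (mem_lcs_zero y)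
  have hmem : ∀ {a b : G}, a ∈ lcs G 1 → b ∈ lcs G 1 → ⁅a, b⁆ ∈ lcs G 3 :=
    fun ha hb => commutatorElement_mem_lcs ha hb le_rfl
  obtain ⟨β, hβ⟩ := exists_linearMap₂_lift (p := p)
    (fun x hx y hy => h.factor_one.map_mul hx hy) h.factor_one.exists_eq
    (fun x hx y hy => h.factor_one.map_mul hx hy) h.factor_one.exists_eq
    (F := fun x y => ψ ⁅x, y⁆)
    (fun x hx y hy z hz => hψ.map_commutator_mul_left (hmem hx hz) (hmem hy hz))
    (fun z hz x hx y hy => hψ.map_commutator_mul_right (hmem hz hx) (hmem hz hy))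
    (fun x hx y hy h0 => hψ.map_eq_zero
      (commutatorElement_mem_lcs (h.factor_one.mem_of_eq_zero hx h0) hy le_rfl))
    (fun x hx y hy h0 => hψ.map_eq_zero
      (commutatorElement_mem_lcs hx (h.factor_one.mem_of_eq_zero hy h0) le_rfl))
  refine (h.isCaminaTriple hG).false_of_fourth h2 κ ?_ β ?_ ?_
  · rintro rfl
    refine hgψ (hψ.eq_zero_of_map_commutator (fun a ha y => ?_) hg)
    rw [← hφ y a ha, ← hκ]
    rfl
  · intro w
    obtain ⟨a, ha, rfl⟩ := h.factor_one.exists_eq w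
    rw [hβ a ha a ha, commutatorElement_self, hψ.map_one]
  · intro w v v'
    obtain ⟨a, ha, rfl⟩ := h.factor_one.exists_eq w
    obtain ⟨x, rfl⟩ := h.surjective v
    obtain ⟨y, rfl⟩ := h.surjective v'
    have hax := commutatorElement_mem_lcs_succ ha x
    have hay := commutatorElement_mem_lcs_succ ha y
    have hya : ⁅y, a⁆ ∈ lcs G 2 := by
      rw [← commutatorElement_inv]
      exact inv_mem hay
    have hayx := commutatorElement_mem_lcs_succ hay x
    have hyax := commutatorElement_mem_lcs_succ hya x
    have key := hψ.map_hall_witt (commutatorElement_mem_lcs_succ hax y) (hmem (hc x y) ha) hyax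
      (commutatorElement_mem_lcs hax (hc x y) le_rfl)
      (commutatorElement_mem_lcs (hc x y) hya le_rfl)
      (commutatorElement_mem_lcs hya hax (by norm_num))
    rw [hψ.map_commutator_swap (hmem ha (hc x y)), ← commutatorElement_inv a y,
      hψ.map_commutator_inv_left hayx (by rwa [commutatorElement_inv])] at key
    rw [hκ, hκ, h.apply_apply_apply ha, h.apply_apply_apply ha, hφ y _ hax, hφ x _ hay,
      h.apply_apply, hβ _ ha _ (hc x y)]
    linear_combination key

theorem exists_commutator_eq_of_lcs_three (h : IsCaminaModel π πW m t) (hG : IsCaminaGroup G)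
    (hpG : IsPGroup p G) (h1 : lcs G 1 ≠ ⊥) (h3 : lcs G 3 = ⊥) {w g : G} (hw : w ∈ lcs G 1)
    (hw' : w ∉ lcs G 2) (hg : g ∈ lcs G 2) : ∃ x, ⁅w, x⁆ = g := by
  obtain ⟨A, _, _, _, q, hq⟩ := exists_isLCSFactor_zmod (G := G) p 2
    fun x hx => hG.pow_mem_lcs_succ hpG h1 hx
  have hmem := fun x => commutatorElement_mem_lcs_succ hw x
  obtain ⟨f, hf⟩ := exists_linearMap_lift (p := p)
    (fun x hx y hy => h.factor_zero.map_mul hx hy) h.factor_zero.exists_eq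
    (F := fun x => q ⁅w, x⁆) (fun x _ y _ => hq.map_commutator_mul_right (hmem x) (hmem y))
    (fun x hx h0 => hq.map_eq_zero
      (commutatorElement_mem_lcs hw (h.factor_zero.mem_of_eq_zero hx h0) le_rfl))
  have hf : ∀ x, f (π x) = q ⁅w, x⁆ := fun x => hf x (mem_lcs_zero x)
  have hrange : LinearMap.range f = ⊤ := by
    by_contra hne
    obtain ⟨l, hl0, hl⟩ := Submodule.exists_le_ker_of_lt_top _ (lt_top_iff_ne_top.mpr hne)
    obtain ⟨φ, hφ⟩ := lcsDual.exists_eq_of_isLCSHom (hq.toIsLCSHom.comp l.toAddMonoidHom)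
    have hφ0 : φ ≠ 0 := by
      rintro rfl
      refine hl0 (LinearMap.ext fun a => ?_)
      obtain ⟨x, hx, rfl⟩ := hq.exists_eq a
      exact (hφ x hx).symm
    refine hw' (h.factor_one.mem_of_eq_zero hw ?_)
    rw [← Submodule.mem_bot (ZMod p), ← ((h.isCaminaTriple hG).dimensions hφ0).1,
      LinearMap.mem_ker]
    refine LinearMap.ext fun v => ?_
    obtain ⟨x, rfl⟩ := h.surjective v
    rw [LinearMap.formAt_apply, h.apply_apply_apply hw, hφ _ (hmem x)]
    exact (congrArg l (hf x).symm).trans (hl (LinearMap.mem_range_self f _))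
  obtain ⟨v, hv⟩ := LinearMap.range_eq_top.mp hrange (q g)
  obtain ⟨x, rfl⟩ := h.surjective v
  refine ⟨x, ?_⟩
  have h0 : q (⁅w, x⁆ * g⁻¹) = 0 := by
    rw [hq.map_mul (hmem x) (inv_mem hg), hq.map_inv hg, ← hf, hv, add_neg_cancel]
  rw [hq.eq_iff (mul_mem (hmem x) (inv_mem hg)), h3, mem_bot, mul_inv_eq_one] at h0
  exact h0

end IsCaminaModel

namespace IsCaminaGroup

variable {G : Type*} [Group G] [Finite G] {p : ℕ} [Fact p.Prime]

/-- A finite Camina `p`-group has nilpotency class at most three. -/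
theorem lcs_three_eq_bot (hG : IsCaminaGroup G) (hpG : IsPGroup p G) : lcs G 3 = ⊥ := by
  by_contra h3
  have hne : ∀ n ≤ 3, lcs G n ≠ ⊥ := fun n hn h0 =>
    h3 (le_bot_iff.mp ((Subgroup.lowerCentralSeries_antitone _ hn).trans_eq h0))
  have h1 := hne 1 (by norm_num)
  obtain ⟨V, W, _, _, _, _, _, _, π, πW, m, t, h⟩ := hG.exists_isCaminaModel hpG h1
  by_cases hp : p = 2
  · subst hp
    exact h.false_of_two hG hpG h1 (hpG.lcs_succ_ne (hne 2 (by norm_num)))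
  · exact h.false_of_ne_two hG hpG hp (hpG.lcs_succ_ne h3)

theorem exists_commutator_eq_of_mem (hG : IsCaminaGroup G) (hpG : IsPGroup p G) {w g : G}
    (hw : w ∈ lcs G 1) (hw' : w ∉ lcs G 2) (hg : g ∈ lcs G 2) : ∃ x, ⁅w, x⁆ = g := by
  have h1 : lcs G 1 ≠ ⊥ := by
    intro h1
    rw [h1, mem_bot] at hw
    exact hw' (hw ▸ one_mem _)
  obtain ⟨V, W, _, _, _, _, _, _, π, πW, m, t, h⟩ := hG.exists_isCaminaModel hpG h1
  exact h.exists_commutator_eq_of_lcs_three hG hpG h1 (hG.lcs_three_eq_bot hpG) hw hw' hg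

end IsCaminaGroup

section Conj

variable {G : Type*} [Group G]

theorem Subgroup.exists_mem_lcs_notMem_succ {x : G} {n : ℕ} (hx : x ∉ lcs G n) :
    ∃ k < n, x ∈ lcs G k ∧ x ∉ lcs G (k + 1) := by
  induction n with
  | zero => exact absurd (mem_lcs_zero x) hx
  | succ n ih =>
    by_cases hn : x ∈ lcs G n
    · exact ⟨n, n.lt_succ_self, hn, hx⟩
    · obtain ⟨k, hk, h⟩ := ih hn
      exact ⟨k, hk.trans n.lt_succ_self, h⟩

theorem IsConj.mul_inv_mem_lcs_succ {x y : G} {n : ℕ} (h : IsConj x y) (hx : x ∈ lcs G n) :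
    x * y⁻¹ ∈ lcs G (n + 1) := by
  obtain ⟨a, rfl⟩ := isConj_iff.mp h
  rw [show x * (a * x * a⁻¹)⁻¹ = ⁅x, a⁆ by rw [commutatorElement_def]; group]
  exact commutatorElement_mem_lcs_succ hx a

variable [Finite G] {p : ℕ} [Fact p.Prime]

theorem IsCaminaGroup.isConj_of_mul_inv_mem (hG : IsCaminaGroup G) (hpG : IsPGroup p G) {x y : G}
    {n : ℕ} (hx : x ∈ lcs G n) (hx' : x ∉ lcs G (n + 1)) (hxy : x * y⁻¹ ∈ lcs G (n + 1)) :
    IsConj x y := by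
  obtain ⟨a, ha⟩ : ∃ a, ⁅x, a⁆ = x * y⁻¹ := by
    match n with
    | 0 => exact hG.exists_commutator_eq hx' hxy
    | 1 => exact hG.exists_commutator_eq_of_mem hpG hx hx' hxy
    | n + 2 =>
      have := Subgroup.lowerCentralSeries_antitone _ (by omega : 3 ≤ n + 2 + 1) hxy
      change x * y⁻¹ ∈ lcs G 3 at this
      rw [hG.lcs_three_eq_bot hpG, mem_bot] at this
      exact ⟨1, by rw [this, commutatorElement_one_right]⟩
  refine isConj_iff.mpr ⟨a, ?_⟩
  rw [commutatorElement_def, mul_assoc, mul_assoc, mul_right_inj, ← mul_assoc] at ha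
  rw [← inv_inj, ← ha]
  group

theorem IsCaminaGroup.isConj_inv_mul (hG : IsCaminaGroup G) (hpG : IsPGroup p G) {h h' i i' : G}
    (hh : IsConj h h') (hi : IsConj i i') (hne : ¬IsConj i h) : IsConj (i⁻¹ * h) (i'⁻¹ * h') := by
  have hd : i⁻¹ * h ∉ lcs G 3 := by
    rw [hG.lcs_three_eq_bot hpG, mem_bot, inv_mul_eq_one]
    rintro rfl
    exact hne (IsConj.refl i)
  obtain ⟨n, -, hn, hn'⟩ := exists_mem_lcs_notMem_succ hd
  have hin : i ∈ lcs G n := by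
    by_contra hin
    obtain ⟨k, hk, hik, hik'⟩ := exists_mem_lcs_notMem_succ hin
    refine hne (hG.isConj_of_mul_inv_mem hpG hik hik' ?_)
    rw [show i * h⁻¹ = i * (i⁻¹ * h)⁻¹ * i⁻¹ by group]
    exact conj_mem_lcs (inv_mem (Subgroup.lowerCentralSeries_antitone _ hk hn)) i
  have hhn : h ∈ lcs G n := by
    rw [← mul_inv_cancel_left i h]
    exact mul_mem hin hn
  refine hG.isConj_of_mul_inv_mem hpG hn hn' ?_
  rw [show i⁻¹ * h * (i'⁻¹ * h')⁻¹ = i⁻¹ * (h * h'⁻¹ * (i * i'⁻¹)⁻¹) * i⁻¹⁻¹ by group]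
  exact conj_mem_lcs
    (mul_mem (hh.mul_inv_mem_lcs_succ hhn) (inv_mem (hi.mul_inv_mem_lcs_succ hin))) _

end Conj

/-- Every finite Camina `p`-group satisfies the unique intersection number condition. -/
theorem camina_pGroup_uniqueIntersectionNumberCondition (p : ℕ) (hp : p.Prime)
    (G : Type*) [Group G] [Finite G] (hpG : IsPGroup p G) (hG : IsCaminaGroup G) :
    UniqueIntersectionNumberCondition G := by
  have := Fact.mk hp
  intro Ch Ci hne
  obtain ⟨h, rfl⟩ := ConjClasses.exists_rep Ch
  obtain ⟨i, rfl⟩ := ConjClasses.exists_rep Ci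
  refine ⟨ConjClasses.mk (i⁻¹ * h), ⟨h, ConjClasses.mem_carrier_mk,
    Set.mem_mul.mpr ⟨i, ConjClasses.mem_carrier_mk, _, ConjClasses.mem_carrier_mk,
      mul_inv_cancel_left i h⟩⟩, ?_⟩
  rintro Cj ⟨h', hh', hmul⟩
  obtain ⟨i', hi', j', hj', rfl⟩ := Set.mem_mul.mp hmul
  rw [ConjClasses.mem_carrier_iff_mk_eq] at hh' hi' hj'
  rw [← hj', ConjClasses.mk_eq_mk_iff_isConj]
  have := hG.isConj_inv_mul hpG (ConjClasses.mk_eq_mk_iff_isConj.mp hh').symm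
    (ConjClasses.mk_eq_mk_iff_isConj.mp hi').symm
    fun hc => hne (ConjClasses.mk_eq_mk_iff_isConj.mpr hc).symm
  rw [inv_mul_cancel_left] at this
  exact this.symm
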